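/- arXiv:1601.01205 — 6 statements merged into one kernel-verified Lean document; each statement's English description precedes it below -/
import Mathlib

section
/- Let X be a spectral space and Y a subset of X. Then Y is proconstructible (i.e. closed in X^con) if and only if Y with the subspace topology is a spectral space and the inclusion Y → X is a spectral map. -/
open TopologicalSpace Set

universe u

/-- A topological space is *spectral* if it is quasi-compact, `T0`, has a basis of quasi-compact
open subsets closed under finite intersections, and every nonempty irreducible closed subset
has a (necessarily unique) generic point. -/
structure IsSpectralSpace (X : Type*) [TopologicalSpace X] : Prop where
  compactSpace : CompactSpace X
  t0Space : T0Space X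
  basis : ∃ B : Set (Set X), (∀ U ∈ B, IsOpen U ∧ IsCompact U) ∧
    Set.univ ∈ B ∧ (∀ U ∈ B, ∀ V ∈ B, U ∩ V ∈ B) ∧ TopologicalSpace.IsTopologicalBasis B
  quasiSober : QuasiSober X

/-- The constructible topology: generated by the quasi-compact opens and their complements. -/
def constructibleTop (X : Type*) [TopologicalSpace X] : TopologicalSpace X :=
  TopologicalSpace.generateFrom
    ({U : Set X | IsOpen U ∧ IsCompact U} ∪ {U : Set X | IsOpen Uᶜ ∧ IsCompact Uᶜ})

/-- A subset is Thomason if it is a union of closed subsets with quasi-compact open complement. -/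
def IsThomason {X : Type*} [TopologicalSpace X] (V : Set X) : Prop :=
  ∃ S : Set (Set X), (∀ C ∈ S, IsClosed C ∧ IsOpen Cᶜ ∧ IsCompact Cᶜ) ∧ V = ⋃₀ S

/-- A point is visible if `{x} = V \ (V ∩ W)` for Thomason subsets `V`, `W`. -/
def IsVisiblePoint {X : Type*} [TopologicalSpace X] (x : X) : Prop :=
  ∃ V W : Set X, IsThomason V ∧ IsThomason W ∧ ({x} : Set X) = V \ (V ∩ W)

/-- A dimension function on a topological space. -/
structure IsDimensionFunction {X : Type u} [TopologicalSpace X] (d : X → Ordinal.{u}) : Prop where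
  not_isLimit : ∀ x, ¬ Order.IsSuccLimit (d x)
  le_of_mem_closure : ∀ x y, y ∈ closure ({x} : Set X) → d y ≤ d x
  eq_of_mem_closure : ∀ x y, y ∈ closure ({x} : Set X) → d y = d x → x = y

/-- A spectral dimension function: all sublevel sets are Thomason. -/
def IsSpectralDimensionFunction {X : Type u} [TopologicalSpace X] (d : X → Ordinal.{u}) : Prop :=
  IsDimensionFunction d ∧ ∀ α : Ordinal.{u}, IsThomason {x : X | d x ≤ α}

/-- The Krull filtration `X_{≤α}`. -/
noncomputable def krullSet (X : Type u) [TopologicalSpace X] (α : Ordinal.{u}) : Set X :=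
  Ordinal.limitRecOn α
    {x : X | IsClosed ({x} : Set X)}
    (fun _ S => S ∪ {x : X | x ∈ Sᶜ ∧ IsClosed {y : (Sᶜ : Set X) | (y : X) = x}})
    (fun o _ ih => ⋃ κ : Set.Iio o, ih κ.1 κ.2)

/-- The (transfinite) Krull dimension of a point. -/
noncomputable def kdim (X : Type u) [TopologicalSpace X] (x : X) : Ordinal.{u} :=
  sInf {α : Ordinal.{u} | x ∈ krullSet X α}

/-- The Cantor–Bendixson filtration `X_{≤α}`. -/
noncomputable def cbSet (X : Type u) [TopologicalSpace X] (α : Ordinal.{u}) : Set X :=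
  Ordinal.limitRecOn α
    {x : X | IsOpen ({x} : Set X)}
    (fun _ S => S ∪ {x : X | x ∈ Sᶜ ∧ IsOpen {y : (Sᶜ : Set X) | (y : X) = x}})
    (fun o _ ih => ⋃ κ : Set.Iio o, ih κ.1 κ.2)

/-- `X` has Cantor–Bendixson rank if the filtration exhausts `X`. -/
def HasCantorBendixsonRank (X : Type u) [TopologicalSpace X] : Prop :=
  ∃ β : Ordinal.{u}, cbSet X β = Set.univ

/-- The Cantor–Bendixson rank of a point. -/
noncomputable def cbRank (X : Type u) [TopologicalSpace X] (x : X) : Ordinal.{u} :=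
  sInf {α : Ordinal.{u} | x ∈ cbSet X α}

/-!
In its constructible topology a spectral space is compact and Hausdorff, and a spectral map is
continuous for the constructible topologies. Hence the image of a spectral map between spectral
spaces is compact, thus closed, in the constructible topology.

Conversely, let `Y` be proconstructible in `X`. For `U` quasi-compact open, `U ∩ Y` is
proconstructible, hence quasi-compact; these sets form a basis of `Y`. For the generic points, the
closure of a proconstructible set `S` consists of the specializations of its points: an ultrafilter
on `S` converging to `x` has a constructible limit `y ∈ S`, and `y` lies in every quasi-compact open
neighborhood of `x` because these are constructibly closed. If `S` is irreducible and closed in `Y`,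
applying this to the generic point of its closure in `X` yields a generic point of `S`.
-/

theorem constructibleTop_eq_constructibleTopology (X : Type*) [TopologicalSpace X] :
    constructibleTop X = constructibleTopology X := by
  simp only [constructibleTop, constructibleTopology, constructibleTopologySubbasis,
    isOpen_compl_iff]

theorem isSpectralSpace_iff_spectralSpace {X : Type*} [TopologicalSpace X] :
    IsSpectralSpace X ↔ SpectralSpace X where
  mp h := by
    obtain ⟨B, isOpen_isCompact, -, inter_mem, isBasis⟩ := h.basis
    exact
      { h.compactSpace, h.t0Space, h.quasiSober,
        PrespectralSpace.of_isTopologicalBasis isBasis fun U hU => (isOpen_isCompact U hU).2,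
        QuasiSeparatedSpace.of_isTopologicalBasis (b := ((↑) : B → Set X))
          (Subtype.range_coe.symm ▸ isBasis)
          fun U V => (isOpen_isCompact _ (inter_mem _ U.2 _ V.2)).2 with }
  mpr _ :=
    { compactSpace := inferInstance
      t0Space := inferInstance
      quasiSober := inferInstance
      basis := ⟨{U | IsOpen U ∧ IsCompact U}, fun _ hU => hU, ⟨isOpen_univ, isCompact_univ⟩,
        fun _ hU _ hV => ⟨hU.1.inter hV.1, hU.2.inter_of_isOpen hV.2 hU.1 hV.1⟩,
        PrespectralSpace.isTopologicalBasis⟩ }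

section Constructible

open scoped Topology

variable {X Y : Type*} [TopologicalSpace X] [TopologicalSpace Y] {f : X → Y}

theorem isClopen_constructibleTopology {U : Set X} (hU : IsOpen U) (hU' : IsCompact U) :
    @IsClopen X (constructibleTopology X) U :=
  ⟨@IsClosed.mk X (constructibleTopology X) U <|
      IsCompact.isOpen_constructibleTopology_of_isClosed ((compl_compl U).symm ▸ hU')
        hU.isClosed_compl,
    hU'.isOpen_constructibleTopology_of_isOpen hU⟩

theorem constructibleTopology_le [PrespectralSpace X] :
    constructibleTopology X ≤ ‹TopologicalSpace X› :=
  (generateFrom_anti fun _ hU => Or.inl hU).trans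
    PrespectralSpace.isTopologicalBasis.eq_generateFrom.ge

theorem compactSpace_constructibleTopology [CompactSpace X] [QuasiSober X] [PrespectralSpace X]
    [QuasiSeparatedSpace X] : @CompactSpace X (constructibleTopology X) :=
  @Function.Surjective.compactSpace _ _ _ (constructibleTopology X) _
    (WithTopology.continuous_ofTopology _) _ (WithTopology.ofTopology_surjective _)

theorem totallySeparatedSpace_constructibleTopology [T0Space X] [PrespectralSpace X] :
    @TotallySeparatedSpace X (constructibleTopology X) := by
  refine (@totallySeparatedSpace_iff_exists_isClopen X (constructibleTopology X)).2
    fun x y hxy => ?_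
  obtain ⟨U, ⟨hU, hU'⟩, separates⟩ :
      ∃ U ∈ {U : Set X | IsOpen U ∧ IsCompact U}, ¬(x ∈ U ↔ y ∈ U) := by
    simpa only [not_forall, exists_prop] using
      mt PrespectralSpace.isTopologicalBasis.eq_iff.2 hxy
  have isClopen := isClopen_constructibleTopology hU hU'
  by_cases hx : x ∈ U
  · exact ⟨U, isClopen, hx, fun hy => separates (iff_of_true hx hy)⟩
  · refine ⟨Uᶜ, @IsClopen.compl X (constructibleTopology X) U isClopen, hx, fun hy => ?_⟩
    exact separates (iff_of_false hx hy)

theorem continuous_constructibleTopology_of_isSpectralMap (hf : IsSpectralMap f) :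
    Continuous[constructibleTopology X, constructibleTopology Y] f := by
  refine continuous_generateFrom_iff.2 ?_
  rintro U (⟨hU, hU'⟩ | ⟨hU, hU'⟩)
  · exact (hU'.preimage_of_isOpen hf hU).isOpen_constructibleTopology_of_isOpen
      (hU.preimage hf.continuous)
  · exact (hU'.preimage_of_isOpen hf hU.isOpen_compl).isOpen_constructibleTopology_of_isClosed
      (hU.preimage hf.continuous)

theorem exists_specializes_of_isCompact_constructibleTopology [PrespectralSpace X] {S : Set X}
    (hS : @IsCompact X (constructibleTopology X) S) {x : X} (hx : x ∈ closure S) :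
    ∃ y ∈ S, y ⤳ x := by
  obtain ⟨u, hSu, hux⟩ := mem_closure_iff_ultrafilter.1 hx
  obtain ⟨y, hyS, huy⟩ := @IsCompact.ultrafilter_le_nhds' X (constructibleTopology X) S hS u hSu
  refine ⟨y, hyS, PrespectralSpace.isTopologicalBasis.nhds_hasBasis.ge_iff.2 ?_⟩
  rintro U ⟨⟨hU, hU'⟩, hxU⟩
  have hyU : y ∈ U :=
    (@isClosed_iff_ultrafilter X U (constructibleTopology X)).1
      (isClopen_constructibleTopology hU hU').1 y u huy (hux (hU.mem_nhds hxU))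
  exact hU.mem_nhds hyU

/-- A subset is proconstructible if it is closed in the constructible topology. The definition
uses Mathlib's `constructibleTopology`, which coincides with `constructibleTop`. -/
def IsProconstructible (S : Set X) : Prop :=
  IsClosed[constructibleTopology X] S

theorem isClosed_constructibleTop_iff_isProconstructible {S : Set X} :
    IsClosed[constructibleTop X] S ↔ IsProconstructible S := by
  rw [constructibleTop_eq_constructibleTopology, IsProconstructible]

theorem isProconstructible_of_isClosed [PrespectralSpace X] {S : Set X} (hS : IsClosed S) :
    IsProconstructible S :=
  hS.mono constructibleTopology_le

theorem isProconstructible_range [CompactSpace X] [QuasiSober X] [PrespectralSpace X]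
    [QuasiSeparatedSpace X] [T0Space Y] [PrespectralSpace Y] (hf : IsSpectralMap f) :
    IsProconstructible (range f) := by
  have compact : @CompactSpace X (constructibleTopology X) := compactSpace_constructibleTopology
  have separated : @TotallySeparatedSpace Y (constructibleTopology Y) :=
    totallySeparatedSpace_constructibleTopology
  have hausdorff := @TotallySeparatedSpace.t2Space Y (constructibleTopology Y) separated
  have continuous := continuous_constructibleTopology_of_isSpectralMap hf
  exact @IsCompact.isClosed Y (constructibleTopology Y) hausdorff _
    (@isCompact_range X Y (constructibleTopology X) (constructibleTopology Y) compact f continuous)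

namespace IsProconstructible

variable {S T : Set X}

theorem inter (hS : IsProconstructible S) (hT : IsProconstructible T) :
    IsProconstructible (S ∩ T) :=
  @IsClosed.inter X S T (constructibleTopology X) hS hT

variable [CompactSpace X] [QuasiSober X] [PrespectralSpace X] [QuasiSeparatedSpace X]

theorem isCompact_constructibleTopology (hS : IsProconstructible S) :
    @IsCompact X (constructibleTopology X) S :=
  @IsClosed.isCompact X (constructibleTopology X) S compactSpace_constructibleTopology hS

theorem isCompact (hS : IsProconstructible S) : IsCompact S := by
  simpa only [image_id] using
    @IsCompact.image X X (constructibleTopology X) _ S id hS.isCompact_constructibleTopology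
      (continuous_id_iff_le.2 constructibleTopology_le)

end IsProconstructible

end Constructible

section Inducing

open Topology

variable {X Y : Type*} [TopologicalSpace X] [TopologicalSpace Y] {f : X → Y}

theorem quasiSeparatedSpace_of_isInducing [PrespectralSpace Y] [QuasiSeparatedSpace Y]
    (hi : IsInducing f) (hf : IsSpectralMap f) : QuasiSeparatedSpace X := by
  have isBasis := (PrespectralSpace.isTopologicalBasis (X := Y)).isInducing hi
  rw [image_eq_range] at isBasis
  refine .of_isTopologicalBasis isBasis fun U V => ?_
  rw [← preimage_inter]
  exact (U.2.2.inter_of_isOpen V.2.2 U.2.1 V.2.1).preimage_of_isOpen hf (U.2.1.inter V.2.1)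

variable [CompactSpace Y] [QuasiSober Y] [PrespectralSpace Y] [QuasiSeparatedSpace Y]

theorem IsProconstructible.isSpectralMap_of_isInducing (hf : IsProconstructible (range f))
    (hi : IsInducing f) : IsSpectralMap f where
  toContinuous := hi.continuous
  isCompact_preimage_of_isOpen U hU hU' := by
    rw [hi.isCompact_iff, image_preimage_eq_inter_range]
    have isProconstructible_U : IsProconstructible U := (isClopen_constructibleTopology hU hU').1
    exact (isProconstructible_U.inter hf).isCompact

theorem IsProconstructible.quasiSober_of_isInducing (hf : IsProconstructible (range f))
    (hi : IsInducing f) : QuasiSober X where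
  sober {S} hS hS' := by
    have image_eq : f '' S = closure (f '' S) ∩ range f := by
      rw [← image_preimage_eq_inter_range, ← hi.closure_eq_preimage_closure_image,
        hS'.closure_eq]
    have isProconstructible_image : IsProconstructible (f '' S) :=
      image_eq ▸ (isProconstructible_of_isClosed isClosed_closure).inter hf
    obtain ⟨y, hy⟩ := QuasiSober.sober
      (hS.image f hi.continuous.continuousOn).closure isClosed_closure
    obtain ⟨_, ⟨x, hxS, rfl⟩, hxy⟩ := exists_specializes_of_isCompact_constructibleTopology
      isProconstructible_image.isCompact_constructibleTopology hy.mem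
    refine ⟨x, isGenericPoint_iff_specializes.2 fun z =>
      ⟨fun hxz => hxz.mem_closed hS' hxS, fun hzS => ?_⟩⟩
    exact hi.specializes_iff.1 <|
      hxy.trans (hy.specializes (subset_closure (mem_image_of_mem f hzS)))

theorem IsProconstructible.spectralSpace_of_isEmbedding [T0Space Y]
    (hf : IsProconstructible (range f)) (he : IsEmbedding f) : SpectralSpace X :=
  have hi := he.isInducing
  have hf' := hf.isSpectralMap_of_isInducing hi
  { he.t0Space,
    hf.quasiSober_of_isInducing hi,
    quasiSeparatedSpace_of_isInducing hi hf',
    PrespectralSpace.of_isInducing f hi hf' with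
    isCompact_univ := isCompact_univ.preimage_of_isOpen hf' isOpen_univ }

end Inducing

theorem statement1 {X : Type u} [TopologicalSpace X] (hX : IsSpectralSpace X) (Y : Set X) :
    @IsClosed X (constructibleTop X) Y ↔
      IsSpectralSpace Y ∧ IsSpectralMap ((↑) : Y → X) := by
  have : SpectralSpace X := isSpectralSpace_iff_spectralSpace.1 hX
  have range_eq : range ((↑) : Y → X) = Y := Subtype.range_coe
  rw [isClosed_constructibleTop_iff_isProconstructible, isSpectralSpace_iff_spectralSpace]
  constructor
  · intro h
    rw [← range_eq] at h
    exact ⟨h.spectralSpace_of_isEmbedding .subtypeVal, h.isSpectralMap_of_isInducing .subtypeVal⟩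
  · rintro ⟨_, h⟩
    exact range_eq ▸ isProconstructible_range h
end

section
/- Let X be a spectral space, Y a proconstructible subset of X with the subspace topology, and V a nonempty irreducible closed subset of Y. Let W be the closure of V in X. Then W is irreducible in X, its unique generic point x lies in V, and V is the closure of {x} in Y; in particular every nonempty irreducible closed subset of Y has a generic point. -/
open TopologicalSpace Set

universe u

/-!
Let `x` be the generic point of the closure of a set `s`. Every neighbourhood of `x` meets `s`, and
it does so inside `closure {x}`, because `s ⊆ closure {x}`. Neighbourhoods of `x` intersected with
`closure {x}` form a basis at `x` of the Skula topology, which is finer than the constructible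
topology; hence `x` lies in every proconstructible set `Y` that contains `s`. If `s` is closed in
`Y`, its closure meets `Y` only in `s`, so `x` is a generic point of `s` itself.
-/

section

open Topology Filter

variable {X : Type*} [TopologicalSpace X]

/-- The *Skula topology* of a topological space, generated by its open sets and its closed sets.
It is written as an infimum, so that the given topology supplies the open sets. -/
abbrev skulaTopology (X : Type*) [t : TopologicalSpace X] : TopologicalSpace X :=
  t ⊓ generateFrom {C | IsClosed C}

theorem skulaTopology_le_constructibleTop : skulaTopology X ≤ constructibleTop X := by
  refine le_generateFrom ?_
  rintro U (⟨hU, -⟩ | ⟨hU, -⟩)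
  · exact hU.mono inf_le_left
  · exact (isOpen_generateFrom_of_mem (isOpen_compl_iff.1 hU)).mono inf_le_right

theorem nhds_generateFrom_isClosed (x : X) :
    @nhds X (generateFrom {C | IsClosed C}) x = 𝓟 (closure {x}) := by
  rw [nhds_generateFrom]
  refine le_antisymm (iInf₂_le _ ⟨subset_closure rfl, isClosed_closure⟩) ?_
  exact le_iInf₂ fun C ⟨hxC, hC⟩ ↦
    principal_mono.2 (closure_minimal (singleton_subset_iff.2 hxC) hC)

theorem nhds_skulaTopology (x : X) : @nhds X (skulaTopology X) x = 𝓝[closure {x}] x := by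
  rw [nhds_inf, nhds_generateFrom_isClosed, nhdsWithin]

theorem mem_closure_skulaTopology_iff {x : X} {s : Set X} :
    x ∈ closure[skulaTopology X] s ↔ x ∈ closure (closure {x} ∩ s) := by
  rw [@mem_closure_iff_nhds_ne_bot X (skulaTopology X), nhds_skulaTopology, nhdsWithin, inf_assoc,
    inf_principal, mem_closure_iff_nhds_ne_bot]

theorem mem_closure_skulaTopology_of_isGenericPoint_closure {x : X} {s : Set X}
    (hx : IsGenericPoint x (closure s)) : x ∈ closure[skulaTopology X] s := by
  rw [mem_closure_skulaTopology_iff, hx.def, inter_eq_right.2 subset_closure]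
  exact hx.mem

theorem isGenericPoint_closure_of_isInducing {Z : Type*} [TopologicalSpace Z] {f : Z → X}
    (hf : IsInducing f) {z : Z} {s : Set Z} (hz : IsGenericPoint (f z) (closure (f '' s))) :
    IsGenericPoint z (closure s) := by
  rw [isGenericPoint_def, hf.closure_eq_preimage_closure_image,
    hf.closure_eq_preimage_closure_image, image_singleton, hz.def]

theorem statement3_general [QuasiSober X] [T0Space X] {Y : Set X}
    (hY : IsClosed[skulaTopology X] Y) {V : Set Y} (hV : IsIrreducible V) (hVclosed : IsClosed V) :
    IsIrreducible (closure (((↑) : Y → X) '' V)) ∧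
      ∃ (x : X) (hx : x ∈ Y), IsGenericPoint x (closure (((↑) : Y → X) '' V)) ∧
        (∀ x' : X, IsGenericPoint x' (closure (((↑) : Y → X) '' V)) → x' = x) ∧
        (⟨x, hx⟩ : Y) ∈ V ∧ V = closure {(⟨x, hx⟩ : Y)} := by
  have hW : IsIrreducible (closure (((↑) : Y → X) '' V)) :=
    (hV.image _ continuous_subtype_val.continuousOn).closure
  obtain ⟨x, hx⟩ := QuasiSober.sober hW isClosed_closure
  have hxY : x ∈ Y :=
    (@closure_minimal X (skulaTopology X) _ _ (Subtype.coe_image_subset Y V) hY)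
      (mem_closure_skulaTopology_of_isGenericPoint_closure hx)
  have hxV : IsGenericPoint (⟨x, hxY⟩ : Y) V :=
    hVclosed.closure_eq ▸ isGenericPoint_closure_of_isInducing IsInducing.subtypeVal hx
  exact ⟨hW, x, hxY, hx, fun x' hx' ↦ hx'.eq hx, hxV.mem, hxV.def.symm⟩

end

theorem statement3 {X : Type u} [TopologicalSpace X] (hX : IsSpectralSpace X) (Y : Set X)
    (hY : @IsClosed X (constructibleTop X) Y) (V : Set Y) (hV : IsIrreducible V)
    (hVclosed : IsClosed V) :
    IsIrreducible (closure (((↑) : Y → X) '' V)) ∧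
      ∃ (x : X) (hx : x ∈ Y), IsGenericPoint x (closure (((↑) : Y → X) '' V)) ∧
        (∀ x' : X, IsGenericPoint x' (closure (((↑) : Y → X) '' V)) → x' = x) ∧
        (⟨x, hx⟩ : Y) ∈ V ∧ V = closure {(⟨x, hx⟩ : Y)} := by
  have ⟨_, _, _, _⟩ := hX
  exact statement3_general (hY.mono skulaTopology_le_constructibleTop) hV hVclosed
end

section
/- Let X be a spectral space and Y a spectral subspace of X (i.e. Y carries the subspace topology, is spectral, and the inclusion Y → X is a spectral map). If a point y ∈ Y is visible as a point of X, then y is visible as a point of Y. In particular, if every point of X is visible then every point of Y is visible. -/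
open TopologicalSpace Set

universe u

theorem IsThomason.preimage {X Z : Type*} [TopologicalSpace X] [TopologicalSpace Z] {f : Z → X}
    {V : Set X} (hV : IsThomason V) (hf : IsSpectralMap f) : IsThomason (f ⁻¹' V) := by
  obtain ⟨S, hS, rfl⟩ := hV
  refine ⟨(f ⁻¹' ·) '' S, forall_mem_image.2 fun C hC => ?_, ?_⟩
  · obtain ⟨hClosed, hOpen, hCompact⟩ := hS C hC
    exact ⟨hClosed.preimage hf.continuous, hOpen.preimage hf.continuous,
      hf.isCompact_preimage_of_isOpen hOpen hCompact⟩
  · rw [Set.preimage_sUnion, sUnion_image]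

theorem IsVisiblePoint.of_preimage_singleton_eq {X Z : Type*} [TopologicalSpace X]
    [TopologicalSpace Z] {f : Z → X} {z : Z} (hz : IsVisiblePoint (f z)) (hf : IsSpectralMap f)
    (hfiber : f ⁻¹' {f z} = {z}) : IsVisiblePoint z := by
  obtain ⟨V, W, hV, hW, hVW⟩ := hz
  refine ⟨f ⁻¹' V, f ⁻¹' W, hV.preimage hf, hW.preimage hf, ?_⟩
  rw [← hfiber, hVW, preimage_sdiff, preimage_inter]

theorem statement6_general {X Z : Type*} [TopologicalSpace X] [TopologicalSpace Z] {f : Z → X}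
    (hf : IsSpectralMap f) (hinj : Function.Injective f) :
    (∀ z : Z, IsVisiblePoint (f z) → IsVisiblePoint z) ∧
      ((∀ x : X, IsVisiblePoint x) → ∀ z : Z, IsVisiblePoint z) := by
  have visible_of_image (z : Z) (hz : IsVisiblePoint (f z)) : IsVisiblePoint z :=
    hz.of_preimage_singleton_eq hf (by rw [← image_singleton, hinj.preimage_image])
  exact ⟨visible_of_image, fun hvisible z => visible_of_image z (hvisible (f z))⟩

theorem statement6 {X : Type u} [TopologicalSpace X] (hX : IsSpectralSpace X) (Y : Set X)
    (hY : IsSpectralSpace Y) (hincl : IsSpectralMap ((↑) : Y → X)) :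
    (∀ y : Y, IsVisiblePoint ((y : X)) → IsVisiblePoint y) ∧
      ((∀ x : X, IsVisiblePoint x) → ∀ y : Y, IsVisiblePoint y) :=
  statement6_general hincl Subtype.val_injective
end

section
/- Let X be a noetherian spectral space. Then the Krull dimension function kdim_X : X → Ord is a dimension function on X: it takes no limit ordinal values, satisfies kdim_X y ≤ kdim_X x whenever y lies in the closure of {x}, and satisfies x = y whenever y lies in the closure of {x} and kdim_X y = kdim_X x. -/
open TopologicalSpace Set

universe u

/-! A point enters the Krull filtration only strictly after all its proper specializations, and it
has entered by any stage following theirs. In a T0 space whose specialization order is well-founded,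
the filtration therefore exhausts the space and `kdim` is strictly monotone; it skips limit ordinals
because a limit stage is the union of the earlier ones. A noetherian space has a well-founded
specialization order, since `x ↦ closure {x}` is strictly monotone into its closed subsets. -/

theorem isClosed_singleton_iff_forall_specializes {X : Type*} [TopologicalSpace X] {x : X} :
    IsClosed ({x} : Set X) ↔ ∀ y, x ⤳ y → y = x := by
  simp only [← closure_subset_iff_isClosed, subset_def, ← specializes_iff_mem_closure,
    mem_singleton_iff]

instance wellFoundedLT_specialization {X : Type*} [TopologicalSpace X] [NoetherianSpace X] :
    WellFoundedLT (Specialization X) := by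
  let pointClosure : Specialization X → Closeds X := fun x ↦ .closure {Specialization.ofEquiv x}
  have le_iff (x y : Specialization X) : pointClosure x ≤ pointClosure y ↔ x ≤ y :=
    specializes_iff_closure_subset.symm
  have strictMono : StrictMono pointClosure := fun x y ↦
    (lt_iff_lt_of_le_iff_le' (le_iff y x) (le_iff x y)).2
  exact strictMono.wellFoundedLT

section KrullFiltration

variable {X : Type u} [TopologicalSpace X] {x y : X} {α : Ordinal.{u}}

theorem mem_krullSet_zero : x ∈ krullSet X 0 ↔ ∀ y, x ⤳ y → y = x := by
  rw [krullSet, Ordinal.limitRecOn_zero, mem_ofPred_eq, isClosed_singleton_iff_forall_specializes]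

theorem krullSet_add_one (α : Ordinal.{u}) :
    krullSet X (α + 1) = krullSet X α ∪
      {x | x ∈ (krullSet X α)ᶜ ∧ IsClosed {y : ((krullSet X α)ᶜ : Set X) | (y : X) = x}} := by
  rw [krullSet, Ordinal.limitRecOn_add_one]
  rfl

theorem mem_krullSet_add_one :
    x ∈ krullSet X (α + 1) ↔
      x ∈ krullSet X α ∨ ∀ y, x ⤳ y → y ≠ x → y ∈ krullSet X α := by
  have isClosed_iff (hx : x ∈ (krullSet X α)ᶜ) :
      IsClosed {y : ((krullSet X α)ᶜ : Set X) | (y : X) = x} ↔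
        ∀ y, x ⤳ y → y ≠ x → y ∈ krullSet X α := by
    have singleton_eq : {y : ((krullSet X α)ᶜ : Set X) | (y : X) = x} = {⟨x, hx⟩} := by
      ext y
      simp [Subtype.ext_iff]
    rw [singleton_eq, isClosed_singleton_iff_forall_specializes]
    simp only [subtype_specializes_iff, Subtype.forall, Subtype.mk.injEq, mem_compl_iff]
    exact forall_congr' fun y ↦ by tauto
  rw [krullSet_add_one, mem_union, mem_ofPred_eq, and_congr_right isClosed_iff, mem_compl_iff]
  tauto

theorem mem_krullSet_of_isSuccLimit (hα : Order.IsSuccLimit α) :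
    x ∈ krullSet X α ↔ ∃ β < α, x ∈ krullSet X β := by
  rw [krullSet, Ordinal.limitRecOn_limit _ _ _ _ hα]
  simp only [mem_iUnion, Subtype.exists, mem_Iio, exists_prop]
  rfl

theorem krullSet_mono : Monotone (krullSet X) := by
  intro α β hαβ x hx
  induction β using Ordinal.limitRecOn with
  | zero => rwa [nonpos_iff_eq_zero.1 hαβ] at hx
  | add_one β ih =>
    rcases hαβ.lt_or_eq with hlt | rfl
    · exact mem_krullSet_add_one.2 (.inl (ih (Order.lt_add_one_iff.1 hlt)))
    · exact hx
  | limit β hβ _ =>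
    rcases hαβ.lt_or_eq with hlt | rfl
    · exact (mem_krullSet_of_isSuccLimit hβ).2 ⟨α, hlt, hx⟩
    · exact hx

theorem exists_lt_mem_krullSet_of_specializes (hx : x ∈ krullSet X α) (hxy : x ⤳ y)
    (hne : y ≠ x) : ∃ β < α, y ∈ krullSet X β := by
  induction α using Ordinal.limitRecOn with
  | zero => exact absurd (mem_krullSet_zero.1 hx y hxy) hne
  | add_one α ih =>
    rcases mem_krullSet_add_one.1 hx with hx | hspec
    · obtain ⟨β, hβ, hy⟩ := ih hx
      exact ⟨β, hβ.trans (lt_add_one α), hy⟩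
    · exact ⟨α, lt_add_one α, hspec y hxy hne⟩
  | limit α hα ih =>
    obtain ⟨κ, hκ, hx⟩ := (mem_krullSet_of_isSuccLimit hα).1 hx
    obtain ⟨β, hβ, hy⟩ := ih κ hκ hx
    exact ⟨β, hβ.trans hκ, hy⟩

theorem exists_mem_krullSet [T0Space X] [WellFoundedLT (Specialization X)] (x : X) :
    ∃ α, x ∈ krullSet X α := by
  induction x using (wellFounded_lt (α := Specialization X)).induction with
  | _ x ih =>
    choose! stage mem_stage using ih
    refine ⟨(⨆ y, stage y) + 1, mem_krullSet_add_one.2 (.inr fun y hxy hne ↦ ?_)⟩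
    have hlt : Specialization.toEquiv y < Specialization.toEquiv x := lt_of_le_of_ne hxy hne
    exact krullSet_mono (Ordinal.le_iSup stage y) (mem_stage y hlt)

theorem kdim_le_of_mem_krullSet (hx : x ∈ krullSet X α) : kdim X x ≤ α :=
  csInf_le' (s := {α | x ∈ krullSet X α}) hx

theorem mem_krullSet_kdim (hx : ∃ α, x ∈ krullSet X α) : x ∈ krullSet X (kdim X x) :=
  csInf_mem (s := {α | x ∈ krullSet X α}) hx

theorem not_isSuccLimit_kdim (hx : ∃ α, x ∈ krullSet X α) : ¬ Order.IsSuccLimit (kdim X x) := by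
  intro hlim
  obtain ⟨β, hβ, hxβ⟩ := (mem_krullSet_of_isSuccLimit hlim).1 (mem_krullSet_kdim hx)
  exact (kdim_le_of_mem_krullSet hxβ).not_gt hβ

theorem kdim_lt_of_specializes (hx : ∃ α, x ∈ krullSet X α) (hxy : x ⤳ y) (hne : y ≠ x) :
    kdim X y < kdim X x := by
  obtain ⟨β, hβ, hy⟩ :=
    exists_lt_mem_krullSet_of_specializes (mem_krullSet_kdim hx) hxy hne
  exact (kdim_le_of_mem_krullSet hy).trans_lt hβ

end KrullFiltration

theorem statement9_general {X : Type u} [TopologicalSpace X] [T0Space X]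
    [WellFoundedLT (Specialization X)] : IsDimensionFunction (kdim X) where
  not_isLimit x := not_isSuccLimit_kdim (exists_mem_krullSet x)
  le_of_mem_closure x y hy := by
    rcases eq_or_ne y x with rfl | hne
    · exact le_rfl
    · exact (kdim_lt_of_specializes (exists_mem_krullSet x)
        (specializes_iff_mem_closure.2 hy) hne).le
  eq_of_mem_closure x y hy heq := by
    by_contra hne
    exact (kdim_lt_of_specializes (exists_mem_krullSet x)
      (specializes_iff_mem_closure.2 hy) (Ne.symm hne)).ne heq

theorem statement9 {X : Type u} [TopologicalSpace X] (hX : IsSpectralSpace X)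
    [TopologicalSpace.NoetherianSpace X] :
    IsDimensionFunction (kdim X) := by
  have := hX.t0Space
  exact statement9_general
end

section
/- Let X be a spectral space which has Cantor–Bendixson rank and let Y be a spectral subspace of X (i.e. Y carries the subspace topology, is spectral, and the inclusion Y → X is a spectral map). Then Y has Cantor–Bendixson rank. -/
open TopologicalSpace Set

universe u

/-!
A space has Cantor–Bendixson rank exactly when its only preperfect (dense-in-itself) subset is `∅`.
Indeed, passing from `α` to `α + 1` replaces the complement of `X_{≤α}` by its relative derived
set. A preperfect set therefore survives every stage, while for cardinality reasons the filtration
stabilizes, and the complement of a stable stage is preperfect. Since a continuous injection maps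
nonempty preperfect sets to nonempty preperfect sets, the property passes to subspaces.
-/

open Filter Topology

section IsolatedPoints

variable {X : Type*} [TopologicalSpace X]

theorem isOpen_singleton_subtype_iff_not_accPt {s : Set X} {x : s} :
    IsOpen ({x} : Set s) ↔ ¬AccPt (x : X) (𝓟 s) := by
  rw [isOpen_singleton_iff_punctured_nhds, nhds_ne_subtype_eq_bot_iff, AccPt, not_neBot]

theorem isOpen_singleton_iff_notMem_derivedSet_univ {x : X} :
    IsOpen ({x} : Set X) ↔ x ∉ derivedSet (univ : Set X) := by
  rw [isOpen_singleton_iff_punctured_nhds, mem_derivedSet, AccPt, principal_univ, inf_top_eq,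
    not_neBot]

theorem preperfect_image {Y : Type*} [TopologicalSpace Y] {f : Y → X} {C : Set Y}
    (hC : Preperfect C) (hf : Continuous f) (hinj : Function.Injective f) :
    Preperfect (f '' C) :=
  preperfect_iff_subset_derivedSet.2 <|
    (image_mono (preperfect_iff_subset_derivedSet.1 hC)).trans (hf.image_derivedSet hinj)

end IsolatedPoints

section CantorBendixsonFiltration

variable {X : Type u} [TopologicalSpace X]

theorem compl_cbSet_zero : (cbSet X 0)ᶜ = relDerivedSet (univ : Set X) := by
  ext x
  simp only [cbSet, Ordinal.limitRecOn_zero, mem_compl_iff, mem_ofPred_eq,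
    isOpen_singleton_iff_notMem_derivedSet_univ, not_not, relDerivedSet_apply, inter_univ]

theorem cbSet_add_one (α : Ordinal.{u}) :
    cbSet X (α + 1) = cbSet X α ∪
      {x | x ∈ (cbSet X α)ᶜ ∧ IsOpen {y : ((cbSet X α)ᶜ : Set X) | (y : X) = x}} :=
  Ordinal.limitRecOn_add_one ..

theorem compl_cbSet_add_one (α : Ordinal.{u}) :
    (cbSet X (α + 1))ᶜ = relDerivedSet (cbSet X α)ᶜ := by
  ext x
  by_cases hx : x ∈ cbSet X α
  · simp only [cbSet_add_one, relDerivedSet_apply, mem_compl_iff, mem_union, mem_inter_iff, hx,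
      true_or, not_true_eq_false, and_false]
  · have hsingleton : {y : ((cbSet X α)ᶜ : Set X) | (y : X) = x} = {⟨x, hx⟩} := by
      ext y
      simp only [mem_ofPred_eq, mem_singleton_iff, Subtype.ext_iff]
    simp only [cbSet_add_one, relDerivedSet_apply, mem_compl_iff, mem_union, mem_inter_iff,
      mem_ofPred_eq, mem_derivedSet, hx, not_false_eq_true, true_and, and_true, false_or,
      hsingleton, isOpen_singleton_subtype_iff_not_accPt, not_not]

theorem cbSet_of_isSuccLimit {α : Ordinal.{u}} (hα : Order.IsSuccLimit α) :
    cbSet X α = ⋃ κ : Iio α, cbSet X κ :=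
  Ordinal.limitRecOn_limit _ _ _ _ hα

theorem cbSet_subset_cbSet_add_one (α : Ordinal.{u}) : cbSet X α ⊆ cbSet X (α + 1) :=
  subset_union_left.trans_eq (cbSet_add_one α).symm

theorem cbSet_mono (X : Type u) [TopologicalSpace X] : Monotone (cbSet X) := by
  intro α β hαβ
  induction β using Ordinal.limitRecOn with
  | zero => rw [nonpos_iff_eq_zero.1 hαβ]
  | add_one β ih =>
    rcases hαβ.lt_or_eq with hlt | rfl
    · exact (ih (Order.lt_add_one_iff.1 hlt)).trans (cbSet_subset_cbSet_add_one β)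
    · exact Subset.rfl
  | limit β hβ =>
    rcases hαβ.lt_or_eq with hlt | rfl
    · rw [cbSet_of_isSuccLimit hβ]
      exact subset_iUnion (fun κ : Iio β => cbSet X κ) ⟨α, hlt⟩
    · exact Subset.rfl

theorem exists_cbSet_add_one_eq (X : Type u) [TopologicalSpace X] :
    ∃ α : Ordinal.{u}, cbSet X (α + 1) = cbSet X α := by
  by_contra! hne
  have hstrict : StrictMono (cbSet X) := fun α β hαβ =>
    ((cbSet_subset_cbSet_add_one α).ssubset_of_ne (hne α).symm).trans_subset
      (cbSet_mono X (Order.add_one_le_of_lt hαβ))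
  exact not_injective_of_ordinal _ hstrict.injective

theorem exists_preperfect_compl_cbSet (X : Type u) [TopologicalSpace X] :
    ∃ α : Ordinal.{u}, Preperfect (cbSet X α)ᶜ := by
  obtain ⟨α, hα⟩ := exists_cbSet_add_one_eq X
  exact ⟨α, preperfect_iff_eq_relDerivedSet.2 (by rw [← compl_cbSet_add_one, hα])⟩

theorem subset_compl_cbSet_of_preperfect {C : Set X} (hC : Preperfect C) (α : Ordinal.{u}) :
    C ⊆ (cbSet X α)ᶜ := by
  have hrel {s : Set X} (hs : C ⊆ s) : C ⊆ relDerivedSet s :=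
    (preperfect_iff_eq_relDerivedSet.1 hC).trans_subset (relDerivedSet.monotone hs)
  induction α using Ordinal.limitRecOn with
  | zero => exact (hrel (subset_univ C)).trans_eq compl_cbSet_zero.symm
  | add_one α ih => exact (hrel ih).trans_eq (compl_cbSet_add_one α).symm
  | limit α hα ih =>
    rw [cbSet_of_isSuccLimit hα, compl_iUnion]
    exact subset_iInter fun κ => ih κ κ.2

theorem hasCantorBendixsonRank_iff_forall_preperfect_eq_empty :
    HasCantorBendixsonRank X ↔ ∀ C : Set X, Preperfect C → C = ∅ := by
  constructor
  · rintro ⟨β, hβ⟩ C hC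
    simpa [hβ] using subset_compl_cbSet_of_preperfect hC β
  · intro hempty
    obtain ⟨α, hα⟩ := exists_preperfect_compl_cbSet X
    exact ⟨α, compl_empty_iff.1 (hempty _ hα)⟩

end CantorBendixsonFiltration

theorem statement13_general {X Y : Type*} [TopologicalSpace X] [TopologicalSpace Y]
    (hcb : HasCantorBendixsonRank X) {f : Y → X} (hf : Continuous f)
    (hinj : Function.Injective f) : HasCantorBendixsonRank Y := by
  rw [hasCantorBendixsonRank_iff_forall_preperfect_eq_empty] at hcb ⊢
  exact fun C hC => image_eq_empty.1 (hcb _ (preperfect_image hC hf hinj))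

theorem statement13 {X : Type u} [TopologicalSpace X] (hX : IsSpectralSpace X)
    (hcb : HasCantorBendixsonRank X) (Y : Set X) (hY : IsSpectralSpace Y)
    (hincl : IsSpectralMap ((↑) : Y → X)) :
    HasCantorBendixsonRank Y :=
  statement13_general hcb continuous_subtype_val Subtype.val_injective
end

section
/- Let R be a semi-artinian absolutely flat (von Neumann regular) commutative ring. Then the residue fields generate the unbounded derived category D(R): the smallest localizing subcategory of D(R) containing the objects k(P) = R_P for all prime ideals P of R is D(R) itself. -/
open CategoryTheory CategoryTheory.Limits CategoryTheory.Pretriangulated CategoryTheory.MonoidalCategory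

universe w v u

/-- A commutative ring is absolutely flat (von Neumann regular) if every element `r`
satisfies `r = r ^ 2 * x` for some `x`. -/
def IsAbsolutelyFlat (R : Type u) [CommRing R] : Prop :=
  ∀ r : R, ∃ x : R, r = r ^ 2 * x

/-- A commutative ring is semi-artinian if every nonzero homomorphic image of `R` in the
category of `R`-modules contains a simple submodule. -/
def IsSemiArtinianRing (R : Type u) [CommRing R] : Prop :=
  ∀ I : Ideal R, I ≠ ⊤ → ∃ S : Submodule R (R ⧸ I), IsSimpleModule R ↥S

/-- A localizing subcategory: a class of objects of a triangulated category closed under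
isomorphisms, shifts, cones of morphisms, and arbitrary set-indexed coproducts. -/
structure IsLocalizingSubcategory {T : Type u} [Category.{v} T] [HasZeroObject T]
    [Preadditive T] [HasShift T ℤ] [∀ n : ℤ, (shiftFunctor T n).Additive] [Pretriangulated T]
    (L : Set T) : Prop where
  mem_of_iso : ∀ {A B : T}, (A ≅ B) → A ∈ L → B ∈ L
  shift_mem : ∀ (A : T) (n : ℤ), A ∈ L → (A⟦n⟧ : T) ∈ L
  cone_mem : ∀ Tr : Triangle T, (Tr ∈ distTriang T) → Tr.obj₁ ∈ L → Tr.obj₂ ∈ L → Tr.obj₃ ∈ L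
  coproduct_mem : ∀ {ι : Type w} (f : ι → T), (∀ i, f i ∈ L) →
    ∀ c : Cofan f, IsColimit c → c.pt ∈ L

/-- The smallest localizing subcategory containing a class of objects `S`. -/
def localizingClosure {T : Type u} [Category.{v} T] [HasZeroObject T]
    [Preadditive T] [HasShift T ℤ] [∀ n : ℤ, (shiftFunctor T n).Additive] [Pretriangulated T]
    (S : Set T) : Set T :=
  ⋂₀ {L : Set T | IsLocalizingSubcategory.{w} L ∧ S ⊆ L}

/-- The residue field `k(P) = R_P` of an absolutely flat ring at a prime `P`, viewed as an
object of the derived category `D(R)`, placed in degree `0`. -/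
noncomputable def residueFieldObj (R : Type u) [CommRing R]
    [HasDerivedCategory.{w} (ModuleCat.{u} R)] (P : PrimeSpectrum R) :
    DerivedCategory (ModuleCat.{u} R) :=
  (DerivedCategory.singleFunctor (ModuleCat.{u} R) 0).obj
    (ModuleCat.of R (Localization.AtPrime P.asIdeal))

/-- Degreewise tensor product `R_P ⊗_R A` of a cochain complex `A` of `R`-modules with the
localization `R_P` (which is flat, so this computes the derived tensor product). -/
noncomputable def tensorResidueField (R : Type u) [CommRing R] (P : PrimeSpectrum R)
    (A : CochainComplex (ModuleCat.{u} R) ℤ) : CochainComplex (ModuleCat.{u} R) ℤ :=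
  ((tensorLeft (ModuleCat.of R (Localization.AtPrime P.asIdeal))).mapHomologicalComplex
    (ComplexShape.up ℤ)).obj A

/-!
Let `L` be a localizing subcategory of the derived category of an abelian category with exact
coproducts. If every object of a class `C` has a map that vanishes on homology, whose cone lies in
`L`, to another object of `C`, then `C` is contained in `L`: iterating such maps gives a sequence
`X 0 ⟶ X 1 ⟶ ⋯` whose homotopy colimit is zero, since `1 - shift` is the identity on homology, while
modulo `L` the sequence is constant with homotopy colimit `X 0`.

Connecting maps of short exact sequences `0 ⟶ M' ⟶ F ⟶ M ⟶ 0` vanish on homology. Taking `F` a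
coproduct of copies of a generator shows that `L` contains all modules over a ring as soon as it
contains the ring. Taking `F` a left Kan extension along `Discrete J ⥤ J`, whose values and colimit
are coproducts of values of the given diagram, shows that the objects `M` with `M[0]` in `L` are
closed under filtered colimits. In the same way `L` is everything once it contains all `M[0]`.

If `L` contains the `R_m`, it contains the simple modules `R ⧸ m`, which are `R_m`-modules. By Zorn
some ideal is maximal among those in `L`, and it is `R`: otherwise a simple submodule of the
quotient by it yields a larger one. Hence `R`, all modules, and all of `D(R)` are in `L`.
-/

section EssSurj

variable {C D J : Type*} [Category* C] [Category* D] (L : C ⥤ D) [L.EssSurj]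
  [HasCoproductsOfShape J C]

theorem preservesCoproductsOfShape_of_essSurj
    (hom_ext : ∀ {X : J → C} {Y : C} {a b : L.obj (∐ X) ⟶ L.obj Y},
      (∀ j, L.map (Sigma.ι X j) ≫ a = L.map (Sigma.ι X j) ≫ b) → a = b)
    (exists_desc : ∀ {X : J → C} {Y : C} (a : ∀ j, L.obj (X j) ⟶ L.obj Y),
      ∃ b : L.obj (∐ X) ⟶ L.obj Y, ∀ j, L.map (Sigma.ι X j) ≫ b = a j) :
    PreservesColimitsOfShape (Discrete J) L := by
  suffices ∀ X : J → C, PreservesColimit (Discrete.functor X) L from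
    preservesColimitsOfShape_of_discrete L
  intro X
  refine preservesColimit_of_preserves_colimit_cocone (coproductIsCoproduct X)
    ((Cofan.isColimitMapCoconeEquiv L X (Cofan.mk _ (Sigma.ι X))).symm ?_)
  choose desc hdesc using fun Z (a : ∀ j, L.obj (X j) ⟶ Z) ↦
    exists_desc fun j ↦ a j ≫ (L.objObjPreimageIso Z).inv
  refine Cofan.IsColimit.mk _ (fun t ↦ desc t.pt t.inj ≫ (L.objObjPreimageIso t.pt).hom)
    (fun t j ↦ ?_) (fun t m hm ↦ ?_)
  · simpa [Iso.eq_comp_inv] using hdesc t.pt t.inj j =≫ (L.objObjPreimageIso t.pt).hom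
  · rw [← Iso.comp_inv_eq]
    refine hom_ext fun j ↦ ?_
    rw [hdesc]
    simpa [← Category.assoc, Iso.cancel_iso_inv_right] using hm j

theorem hasCoproductsOfShape_of_essSurj [PreservesColimitsOfShape (Discrete J) L] :
    HasCoproductsOfShape J D := by
  refine ⟨fun F ↦ ?_⟩
  let e : F ≅ Discrete.functor (fun j ↦ L.objPreimage (F.obj ⟨j⟩)) ⋙ L :=
    Discrete.natIso fun j ↦ (L.objObjPreimageIso (F.obj j)).symm
  exact hasColimit_of_iso e

theorem preservesCoproductsOfShape_of_essSurj_comp {E : Type*} [Category* E] (F : D ⥤ E)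
    [PreservesColimitsOfShape (Discrete J) L] [PreservesColimitsOfShape (Discrete J) (L ⋙ F)] :
    PreservesColimitsOfShape (Discrete J) F := by
  refine ⟨fun {K} ↦ ?_⟩
  let X : Discrete J ⥤ C := Discrete.functor fun j ↦ L.objPreimage (K.obj ⟨j⟩)
  have : PreservesColimit (X ⋙ L) F :=
    preservesColimit_of_preserves_colimit_cocone (isColimitOfPreserves L (colimit.isColimit X))
      (isColimitOfPreserves (L ⋙ F) (colimit.isColimit X))
  exact preservesColimit_of_iso_diagram F
    (Discrete.natIso fun j ↦ L.objObjPreimageIso (K.obj j) : X ⋙ L ≅ K)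

end EssSurj

section Localization

variable {C D J : Type*} [Category* C] [Category* D] (L : C ⥤ D) (W : MorphismProperty C)
  [L.IsLocalization W] [W.HasRightCalculusOfFractions]

lemma exists_common_right_denominator {X Y : C} (a b : L.obj X ⟶ L.obj Y) :
    ∃ (X' : C) (s : X' ⟶ X) (f g : X' ⟶ Y),
      W s ∧ L.map f = L.map s ≫ a ∧ L.map g = L.map s ≫ b := by
  obtain ⟨φ, hφ⟩ := Localization.exists_rightFraction L W a
  obtain ⟨ψ, hψ⟩ := Localization.exists_rightFraction L W (L.map φ.s ≫ b)
  refine ⟨_, ψ.s ≫ φ.s, ψ.s ≫ φ.f, ψ.f, W.comp_mem _ _ ψ.hs φ.hs, ?_, ?_⟩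
  · rw [hφ, L.map_comp, L.map_comp, Category.assoc, φ.map_s_comp_map]
  · rw [L.map_comp, Category.assoc, hψ, ψ.map_s_comp_map]

variable [HasCoproductsOfShape J C] [W.IsStableUnderCoproductsOfShape J]

include W in
lemma map_sigma_ι_hom_ext_of_isLocalization {X : J → C} {Y : C} {a b : L.obj (∐ X) ⟶ L.obj Y}
    (hab : ∀ j, L.map (Sigma.ι X j) ≫ a = L.map (Sigma.ι X j) ≫ b) : a = b := by
  have inverts := Localization.inverts L W
  obtain ⟨Z, s, f, f', hs, hf, hf'⟩ := exists_common_right_denominator L W a b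
  have := inverts s hs
  have cover (j : J) : ∃ (X' : C) (u : X' ⟶ X j) (g : X' ⟶ Z), W u ∧
      u ≫ Sigma.ι X j = g ≫ s ∧ g ≫ f = g ≫ f' := by
    obtain ⟨ψ, hψ⟩ := (MorphismProperty.LeftFraction.mk (Sigma.ι X j) s hs).exists_rightFraction
    dsimp at hψ
    obtain ⟨X', u, hu, huf⟩ := (MorphismProperty.map_eq_iff_precomp L W (ψ.f ≫ f)
      (ψ.f ≫ f')).1 (by
        simp only [L.map_comp, hf, hf']
        simp only [← L.map_comp_assoc, ← hψ]
        simp only [L.map_comp, Category.assoc, hab])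
    exact ⟨X', u ≫ ψ.s, u ≫ ψ.f, W.comp_mem _ _ hu ψ.hs, by simp [hψ], by simpa using huf⟩
  choose X' u g hu hug hg using cover
  have : IsIso (L.map (Sigma.desc g) ≫ L.map s) := by
    have hgs : Sigma.desc g ≫ s = Limits.Sigma.map u := by
      ext j
      simp [← hug]
    rw [← L.map_comp, hgs]
    exact inverts _ (W.colimMap _ fun j ↦ hu j.as)
  have : IsIso (L.map (Sigma.desc g)) := IsIso.of_isIso_comp_right _ (L.map s)
  rw [← cancel_epi (L.map s), ← hf, ← hf', ← cancel_epi (L.map (Sigma.desc g)),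
    ← L.map_comp, ← L.map_comp]
  congr 1
  ext j
  simp [hg]

include W in
lemma exists_map_sigma_ι_comp_eq_of_isLocalization {X : J → C} {Y : C}
    (a : ∀ j, L.obj (X j) ⟶ L.obj Y) :
    ∃ b : L.obj (∐ X) ⟶ L.obj Y, ∀ j, L.map (Sigma.ι X j) ≫ b = a j := by
  have inverts := Localization.inverts L W
  choose φ hφ using fun j ↦ Localization.exists_rightFraction L W (a j)
  have : IsIso (L.map (Limits.Sigma.map fun j ↦ (φ j).s)) :=
    inverts _ (W.colimMap _ fun j ↦ (φ j.as).hs)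
  refine ⟨inv (L.map (Limits.Sigma.map fun j ↦ (φ j).s)) ≫ L.map (Sigma.desc fun j ↦ (φ j).f),
    fun j ↦ ?_⟩
  have := inverts _ (φ j).hs
  rw [hφ, ← cancel_epi (L.map (φ j).s), MorphismProperty.RightFraction.map_s_comp_map,
    ← L.map_comp_assoc, ← Sigma.ι_map (fun j ↦ (φ j).s), L.map_comp_assoc,
    IsIso.hom_inv_id_assoc, ← L.map_comp, Sigma.ι_desc]

include W in
theorem preservesCoproductsOfShape_of_isLocalization :
    PreservesColimitsOfShape (Discrete J) L := by
  have := Localization.essSurj L W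
  exact preservesCoproductsOfShape_of_essSurj L (map_sigma_ι_hom_ext_of_isLocalization L W)
    (exists_map_sigma_ι_comp_eq_of_isLocalization L W)

end Localization

section HomotopyCategory

variable {V J I : Type*} [Category* V] [Preadditive V] [HasCoproductsOfShape J V]
  {c : ComplexShape I}

lemma nonempty_homotopy_of_isColimit_cofan {K : J → HomologicalComplex V c} {t : Cofan K}
    (ht : IsColimit t) {L : HomologicalComplex V c} {f g : t.pt ⟶ L}
    (h : ∀ j, Homotopy (t.inj j ≫ f) (t.inj j ≫ g)) : Nonempty (Homotopy f g) := by
  have ht' (p : I) := isColimitOfPreserves (HomologicalComplex.eval V c p) ht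
  have hom_ext {p : I} {Y : V} {a b : t.pt.X p ⟶ Y}
      (hab : ∀ j, (t.inj j).f p ≫ a = (t.inj j).f p ≫ b) : a = b :=
    (ht' p).hom_ext fun j ↦ hab j.as
  have exists_desc (p q : I) : ∃ l : t.pt.X p ⟶ L.X q, ∀ j, (t.inj j).f p ≫ l = (h j).hom p q :=
    ⟨(ht' p).desc ⟨_, Discrete.natTrans fun j ↦ (h j.as).hom p q⟩, fun j ↦ (ht' p).fac _ ⟨j⟩⟩
  choose l hl using exists_desc
  refine ⟨⟨l, fun p q hpq ↦ hom_ext fun j ↦ ?_, fun p ↦ hom_ext fun j ↦ ?_⟩⟩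
  · rw [hl, (h j).zero _ _ hpq, comp_zero]
  · have hl' : (fun p q ↦ (t.inj j).f p ≫ l p q) = (h j).hom := funext₂ fun p q ↦ hl p q j
    rw [Preadditive.comp_add, Preadditive.comp_add, ← dNext_comp_left, ← prevD_comp_left, hl']
    exact (h j).comm p

instance : PreservesColimitsOfShape (Discrete J) (HomotopyCategory.quotient V c) := by
  refine preservesCoproductsOfShape_of_essSurj _ (fun {K L a b} hab ↦ ?_) (fun {K L} a ↦ ?_)
  · obtain ⟨f, rfl⟩ := (HomotopyCategory.quotient V c).map_surjective a
    obtain ⟨g, rfl⟩ := (HomotopyCategory.quotient V c).map_surjective b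
    simp only [← Functor.map_comp] at hab
    have ⟨h⟩ := nonempty_homotopy_of_isColimit_cofan (coproductIsCoproduct K)
      fun j ↦ HomotopyCategory.homotopyOfEq _ _ (hab j)
    exact HomotopyCategory.eq_of_homotopy _ _ h
  · choose f hf using fun j ↦ (HomotopyCategory.quotient V c).map_surjective (a j)
    exact ⟨(HomotopyCategory.quotient V c).map (Sigma.desc f), fun j ↦ by
      rw [← Functor.map_comp, Sigma.ι_desc, hf]⟩

instance : HasCoproductsOfShape J (HomotopyCategory V c) :=
  hasCoproductsOfShape_of_essSurj (HomotopyCategory.quotient V c)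

end HomotopyCategory

section ExactColimits

variable {A J I : Type*} [Category* A] [Abelian A] [Category* J] [HasColimitsOfShape J A]

instance (c : ComplexShape I) (n : I) : PreservesColimitsOfShape J
    (HomologicalComplex.shortComplexFunctor A c n) where
  preservesColimit := ⟨fun ht ↦ ⟨ShortComplex.isColimitOfIsColimitπ _
    (isColimitOfPreserves (HomologicalComplex.eval A c _) ht)
    (isColimitOfPreserves (HomologicalComplex.eval A c _) ht)
    (isColimitOfPreserves (HomologicalComplex.eval A c _) ht)⟩⟩

variable [HasExactColimitsOfShape J A]

instance : PreservesColimitsOfShape J (ShortComplex.homologyFunctor A) where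
  preservesColimit {K} := by
    let S := (ShortComplex.functorEquivalence J A).inverse.obj K
    let ev (j : J) : (J ⥤ A) ⥤ A := (evaluation J A).obj j
    let ι (j : J) : ev j ⟶ colim := { app := fun F ↦ colimit.ι F j }
    let e : K ⋙ ShortComplex.homologyFunctor A ≅ S.homology :=
      NatIso.ofComponents (fun j ↦ S.mapHomologyIso (ev j)) fun {i j} f ↦
        ((Iso.eq_inv_comp _).1 (((evaluation J A).map f).app_homology S)).symm
    refine preservesColimit_of_preserves_colimit_cocone (ShortComplex.isColimitColimitCocone K)
      (IsColimit.ofIsoColimit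
        ((IsColimit.precomposeHomEquiv e _).symm (colimit.isColimit S.homology))
        (Cocone.ext (S.mapHomologyIso colim).symm fun j ↦ ?_))
    change ((S.mapHomologyIso (ev j)).hom ≫ (ι j).app S.homology) ≫
      (S.mapHomologyIso colim).inv = ShortComplex.homologyMap (S.mapNatTrans (ι j))
    rw [NatTrans.app_homology]
    simp only [Category.assoc, Iso.hom_inv_id_assoc, Iso.hom_inv_id, Category.comp_id]

instance (c : ComplexShape I) (n : I) : PreservesColimitsOfShape J
    (HomologicalComplex.homologyFunctor A c n) :=
  inferInstanceAs (PreservesColimitsOfShape J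
    (HomologicalComplex.shortComplexFunctor A c n ⋙ ShortComplex.homologyFunctor A))

end ExactColimits

section Triangulated

variable {T : Type*} [Category* T] [HasZeroObject T] [HasShift T ℤ] [Preadditive T]
  [∀ n : ℤ, (shiftFunctor T n).Additive] [Pretriangulated T]
  (P : ObjectProperty T)

theorem isStableUnderProductsOfShape_trW (J : Type*) [HasProductsOfShape J T]
    [P.IsClosedUnderLimitsOfShape (Discrete J)] : P.trW.IsStableUnderProductsOfShape J := by
  refine MorphismProperty.IsStableUnderProductsOfShape.mk _ _ fun X Y _ _ f hf ↦ ?_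
  choose Z g h hT hZ using hf
  exact ObjectProperty.trW.mk _ (productTriangle_distinguished _ hT) (P.prop_pi _ hZ)

lemma shortComplexSplitting_distinguished {S : ShortComplex T} (h : S.Splitting) :
    Triangle.mk S.f S.g (0 : S.X₃ ⟶ S.X₁⟦(1 : ℤ)⟧) ∈ distTriang T :=
  isomorphic_distinguished _ (binaryBiproductTriangle_distinguished S.X₁ S.X₃) _
    (Triangle.isoMk _ _ (Iso.refl S.X₁) h.isoBinaryBiproduct (Iso.refl S.X₃)
      (show S.f ≫ biprod.lift h.r S.g = 𝟙 S.X₁ ≫ biprod.inl by ext <;> simp)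
      (show S.g ≫ 𝟙 S.X₃ = biprod.lift h.r S.g ≫ biprod.snd by simp)
      (show 0 ≫ (𝟙 S.X₁)⟦1⟧' = 𝟙 S.X₃ ≫ 0 by simp))

variable [P.IsTriangulated]

open Opposite in
theorem isStableUnderCoproductsOfShape_trW (J : Type*) [HasCoproductsOfShape J T]
    [P.IsClosedUnderColimitsOfShape (Discrete J)] : P.trW.IsStableUnderCoproductsOfShape J := by
  have : P.op.IsClosedUnderLimitsOfShape (Discrete J) := by
    rw [← P.isClosedUnderColimitsOfShape_op_iff_op, P.isClosedUnderColimitsOfShape_iff,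
      P.colimitsOfShape_congr (Discrete.opposite J)]
    exact P.colimitsOfShape_le (Discrete J)
  have := isStableUnderProductsOfShape_trW P.op J
  refine MorphismProperty.IsStableUnderCoproductsOfShape.mk _ _ fun X Y _ _ f hf ↦ ?_
  let e : Arrow.mk (Limits.Sigma.map f).op ≅ Arrow.mk (Limits.Pi.map fun j ↦ (f j).op) :=
    Arrow.isoMk (opCoproductIsoProduct Y) (opCoproductIsoProduct X) (by
      dsimp
      ext j
      simp only [Category.assoc, Pi.map_π, opCoproductIsoProduct_hom_comp_π,
        opCoproductIsoProduct_hom_comp_π_assoc, ← op_comp, Sigma.ι_map])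
  refine P.trW_of_op ((P.op.trW.arrow_mk_iso_iff e).2 ?_)
  exact P.op.trW.limMap _ fun j ↦ P.op.trW_of_unop (hf j.as)

lemma trW_of_postcomp [IsTriangulated T] [P.IsClosedUnderIsomorphisms] {X Y Z : T}
    {f : X ⟶ Y} {g : Y ⟶ Z} (hg : P.trW g) (hfg : P.trW (f ≫ g)) : P.trW f := by
  obtain ⟨_, _, _, hT₁⟩ := distinguished_cocone_triangle f
  obtain ⟨_, _, _, hT₂, h₂⟩ := hg
  obtain ⟨_, _, _, hT₃, h₃⟩ := hfg
  exact ⟨_, _, _, hT₁, P.ext_of_isTriangulatedClosed₁ _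
    (Triangulated.someOctahedron rfl hT₁ hT₂ hT₃).mem h₃ h₂⟩

end Triangulated

section Telescope

variable {C : Type*} [Category* C] [Preadditive C] [HasCoproductsOfShape ℕ C]

/-- The difference of the identity and the shift on the coproduct of the terms of a sequence
`X 0 ⟶ X 1 ⟶ ⋯`. In a triangulated category, its cone is the homotopy colimit of the sequence. -/
noncomputable def telescopeMap (X : ℕ → C) (s : ∀ n, X n ⟶ X (n + 1)) : ∐ X ⟶ ∐ X :=
  Sigma.desc fun n ↦ Sigma.ι X n - s n ≫ Sigma.ι X (n + 1)

lemma ι_telescopeMap (X : ℕ → C) (s : ∀ n, X n ⟶ X (n + 1)) (n : ℕ) :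
    Sigma.ι X n ≫ telescopeMap X s = Sigma.ι X n - s n ≫ Sigma.ι X (n + 1) :=
  Sigma.ι_desc _ _

/-- The telescope of the constant sequence `X ⟶ X ⟶ ⋯` of identities, followed by the codiagonal.
It is split (`constTelescopeSplitting`), so the homotopy colimit of the sequence is `X`. -/
noncomputable abbrev constTelescope (X : C) : ShortComplex C :=
  ShortComplex.mk (telescopeMap (fun _ ↦ X) fun _ ↦ 𝟙 X) (Sigma.desc fun _ ↦ 𝟙 X) <| by
    ext n
    simp [reassoc_of% ι_telescopeMap]

/-- The splitting of the constant telescope: the section includes the term of index `0`, and the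
retraction sends the term of index `n` to minus the sum of the inclusions of index `< n`. -/
noncomputable def constTelescopeSplitting (X : C) : (constTelescope X).Splitting where
  r := - Sigma.desc fun n ↦ ∑ k ∈ Finset.range n, Sigma.ι (fun _ : ℕ ↦ X) k
  s := Sigma.ι (fun _ : ℕ ↦ X) 0
  f_r := by
    ext n
    simp [reassoc_of% ι_telescopeMap, Finset.sum_range_succ]
  id := by
    ext n
    simp [Preadditive.sum_comp, ι_telescopeMap, -Finset.sum_sub_distrib, Finset.sum_range_sub']

end Telescope

section Triangulated

variable {T : Type*} [Category* T] [HasZeroObject T] [HasShift T ℤ] [Preadditive T]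
  [∀ n : ℤ, (shiftFunctor T n).Additive] [Pretriangulated T] [IsTriangulated T]
  (P : ObjectProperty T) [P.IsTriangulated] [P.IsClosedUnderIsomorphisms]
  [HasCoproductsOfShape ℕ T] [P.IsClosedUnderColimitsOfShape (Discrete ℕ)]

theorem prop_of_isIso_telescopeMap (X : ℕ → T) (s : ∀ n, X n ⟶ X (n + 1)) (hs : ∀ n, P.trW (s n))
    [IsIso (telescopeMap X s)] : P (X 0) := by
  let s₀ (n : ℕ) : X 0 ⟶ X n := Nat.rec (𝟙 _) (fun n f ↦ f ≫ s n) n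
  have hs₀ (n : ℕ) : P.trW (s₀ n) := by
    induction n with
    | zero => exact P.trW.id_mem _
    | succ n ih => exact P.trW.comp_mem _ _ ih (hs n)
  have := isStableUnderCoproductsOfShape_trW P ℕ
  have hσ : P.trW (Limits.Sigma.map s₀) := P.trW.colimMap _ fun n ↦ hs₀ n.as
  have comm : telescopeMap (fun _ ↦ X 0) (fun _ ↦ 𝟙 _) ≫ Limits.Sigma.map s₀ =
      Limits.Sigma.map s₀ ≫ telescopeMap X s := by
    ext n
    simp [reassoc_of% ι_telescopeMap, ι_telescopeMap, s₀]
  have hτ : P.trW (constTelescope (X 0)).f := trW_of_postcomp P hσ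
    (comm ▸ P.trW.comp_mem _ _ hσ (P.trW_of_isIso _))
  exact (P.trW_iff_of_distinguished _
    (shortComplexSplitting_distinguished (constTelescopeSplitting (X 0)))).1 hτ

end Triangulated

section DerivedCategory

open DerivedCategory

variable {A J I : Type*} [Category* A] [Abelian A] [HasCoproductsOfShape J A]
  [HasExactColimitsOfShape (Discrete J) A]

instance (c : ComplexShape I) (n : I) : PreservesColimitsOfShape (Discrete J)
    (HomotopyCategory.homologyFunctor A c n) := by
  have := preservesColimitsOfShape_of_natIso (J := Discrete J)
    (HomotopyCategory.homologyFunctorFactors A c n).symm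
  exact preservesCoproductsOfShape_of_essSurj_comp (HomotopyCategory.quotient A c) _

instance (c : ComplexShape I) :
    (HomotopyCategory.quasiIso A c).IsStableUnderCoproductsOfShape J where
  condition X Y t t' ht ht' f hf φ hφ n :=
    (MorphismProperty.isomorphisms A).colimitsOfShape_le _
      (MorphismProperty.colimitsOfShape.mk' _ _ _ _ (isColimitOfPreserves _ ht)
        (isColimitOfPreserves _ ht')
        (Functor.whiskerRight f (HomotopyCategory.homologyFunctor A c n))
        (fun j ↦ hf j n) _ fun j ↦ by simp [← Functor.map_comp, hφ])

variable [HasDerivedCategory A]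

instance : PreservesColimitsOfShape (Discrete J) (Qh (C := A)) :=
  preservesCoproductsOfShape_of_isLocalization _ (HomotopyCategory.quasiIso A (ComplexShape.up ℤ))

instance : PreservesColimitsOfShape (Discrete J) (Q (C := A)) :=
  preservesColimitsOfShape_of_natIso (quotientCompQhIso A)

instance : HasCoproductsOfShape J (DerivedCategory A) :=
  have := Localization.essSurj (Q (C := A)) (HomologicalComplex.quasiIso A (ComplexShape.up ℤ))
  hasCoproductsOfShape_of_essSurj (Q (C := A))

instance (n : ℤ) : PreservesColimitsOfShape (Discrete J) (homologyFunctor A n) := by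
  have := Localization.essSurj (Q (C := A)) (HomologicalComplex.quasiIso A (ComplexShape.up ℤ))
  have := preservesColimitsOfShape_of_natIso (J := Discrete J) (homologyFunctorFactors A n).symm
  exact preservesCoproductsOfShape_of_essSurj_comp (Q (C := A)) _

instance (n : ℤ) : PreservesColimitsOfShape (Discrete J) (singleFunctor A n) :=
  have : PreservesColimitsOfShape (Discrete J) (CochainComplex.singleFunctor A n) :=
    inferInstanceAs (PreservesColimitsOfShape _ (HomologicalComplex.single A _ n))
  preservesColimitsOfShape_of_natIso (singleFunctorIsoCompQ A n).symm

end DerivedCategory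

section GhostMap

open DerivedCategory

variable {A : Type*} [Category* A] [Abelian A] [HasDerivedCategory A]

/-- A morphism in the derived category is a ghost map if it vanishes on homology. -/
def IsGhost {X Y : DerivedCategory A} (f : X ⟶ Y) : Prop :=
  ∀ n : ℤ, (homologyFunctor A n).map f = 0

lemma isGhost_mor₂_iff_epi {T : Triangle (DerivedCategory A)} (hT : T ∈ distTriang _) :
    IsGhost T.mor₂ ↔ ∀ n, Epi ((homologyFunctor A n).map T.mor₁) :=
  forall_congr' fun n ↦ (HomologySequence.epi_homologyMap_mor₁_iff T hT n).symm

variable [HasCoproductsOfShape ℕ A] [HasExactColimitsOfShape (Discrete ℕ) A]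

lemma isIso_telescopeMap_of_isGhost (X : ℕ → DerivedCategory A) (s : ∀ n, X n ⟶ X (n + 1))
    (hs : ∀ n, IsGhost (s n)) : IsIso (telescopeMap X s) := by
  refine (isIso_iff A _).2 fun i ↦ ?_
  suffices (homologyFunctor A i).map (telescopeMap X s) = 𝟙 _ by rw [this]; infer_instance
  refine (isColimitOfPreserves (homologyFunctor A i) (coproductIsCoproduct X)).hom_ext fun n ↦ ?_
  change (homologyFunctor A i).map (Sigma.ι X n.as) ≫ _ =
    (homologyFunctor A i).map (Sigma.ι X n.as) ≫ _
  rw [← Functor.map_comp, ι_telescopeMap, Functor.map_sub, Functor.map_comp, hs, zero_comp,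
    sub_zero, Category.comp_id]

theorem prop_of_exists_isGhost_trW (P : ObjectProperty (DerivedCategory A))
    [P.IsTriangulated] [P.IsClosedUnderIsomorphisms] [P.IsClosedUnderColimitsOfShape (Discrete ℕ)]
    (C : ObjectProperty (DerivedCategory A))
    (hC : ∀ X, C X → ∃ (Y : _) (f : X ⟶ Y), C Y ∧ IsGhost f ∧ P.trW f) :
    C ≤ P := by
  intro X hX
  choose N f hN hf hfP using fun X : C.FullSubcategory ↦ hC X.obj X.property
  let S (n : ℕ) : C.FullSubcategory := Nat.rec ⟨X, hX⟩ (fun _ Y ↦ ⟨N Y, hN Y⟩) n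
  let s (n : ℕ) : (S n).obj ⟶ (S (n + 1)).obj := f (S n)
  have := isIso_telescopeMap_of_isGhost _ s fun n ↦ hf _
  exact prop_of_isIso_telescopeMap P _ s fun n ↦ hfP _

end GhostMap

section SingleCycles

open HomologicalComplex

variable {V I : Type*} [Category* V] [HasZeroMorphisms V] [HasZeroObject V] [DecidableEq I]
  {c : ComplexShape I}

/-- The inclusion of the cycles of degree `n` in a complex `K`, as a morphism of complexes. -/
noncomputable def singleCyclesι (K : HomologicalComplex V c) (n : I) [K.HasHomology n] :
    (single V c n).obj (K.cycles n) ⟶ K :=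
  mkHomFromSingle (K.iCycles n) fun _ _ ↦ K.iCycles_d _ _

lemma singleObjCyclesSelfIso_inv_cyclesMap_singleCyclesι (K : HomologicalComplex V c) (n : I)
    [K.HasHomology n] :
    (singleObjCyclesSelfIso c n (K.cycles n)).inv ≫ cyclesMap (singleCyclesι K n) n = 𝟙 _ := by
  simp [← cancel_mono (K.iCycles n), singleCyclesι]

instance (K : HomologicalComplex V c) (n : I) [K.HasHomology n] :
    Epi (homologyMap (singleCyclesι K n) n) := by
  refine epi_of_epi_fac (f := (singleObjHomologySelfIso c n _).inv) (h := K.homologyπ n) ?_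
  rw [← singleObjCyclesSelfIso_inv_homologyπ, Category.assoc, homologyπ_naturality,
    reassoc_of% singleObjCyclesSelfIso_inv_cyclesMap_singleCyclesι K n]

end SingleCycles

section SingleFunctor

open DerivedCategory

variable {A : Type*} [Category* A] [Abelian A] [HasDerivedCategory A]

lemma epi_homologyMap_Q_map {K L : CochainComplex A ℤ} (f : K ⟶ L) (n : ℤ)
    [h : Epi (HomologicalComplex.homologyMap f n)] : Epi ((homologyFunctor A n).map (Q.map f)) :=
  ((MorphismProperty.epimorphisms A).arrow_iso_iff
    (Arrow.isoOfNatIso (homologyFunctorFactors A n) (Arrow.mk f))).2 h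

lemma isZero_homology_shift_single (M : A) {n i : ℤ} (h : n + i ≠ 0) :
    IsZero ((homologyFunctor A i).obj (((singleFunctor A 0).obj M)⟦n⟧)) := by
  refine IsZero.of_iso ?_ (((homologyFunctor A 0).shiftIso n i (n + i) rfl).app _)
  change IsZero ((homologyFunctor A (n + i)).obj _)
  rcases h.lt_or_gt with h | h
  · exact isZero_of_isGE _ 0 _ h
  · exact isZero_of_isLE _ 0 _ h

lemma isGhost_shift_single {M N : A} {n m : ℤ} (h : n ≠ m)
    (f : ((singleFunctor A 0).obj M)⟦n⟧ ⟶ ((singleFunctor A 0).obj N)⟦m⟧) : IsGhost f := by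
  intro i
  by_cases hi : n + i = 0
  · exact (isZero_homology_shift_single N (by lia)).eq_of_tgt _ _
  · exact (isZero_homology_shift_single M hi).eq_of_src _ _

lemma exists_epi_homologyMap_single (X : DerivedCategory A) (n : ℤ) :
    ∃ (M : A) (φ : (singleFunctor A n).obj M ⟶ X), Epi ((homologyFunctor A n).map φ) := by
  let K := Q.objPreimage X
  have h := epi_homologyMap_Q_map (singleCyclesι K n) n
  refine ⟨K.cycles n, (singleFunctorIsoCompQ A n).hom.app _ ≫ Q.map (singleCyclesι K n) ≫
    (Q.objObjPreimageIso X).hom, ?_⟩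
  rw [Functor.map_comp, Functor.map_comp]
  exact epi_comp' inferInstance (epi_comp' h inferInstance)

variable [HasCoproductsOfShape ℕ A] [HasExactColimitsOfShape (Discrete ℕ) A]

lemma exists_epi_homologyMap_coproduct_single (X : DerivedCategory A) :
    ∃ (M : ℤ → A) (d : ℕ → ℤ) (ε : ∐ (fun k ↦ (singleFunctor A (d k)).obj (M (d k))) ⟶ X),
      ∀ n : ℤ, Epi ((homologyFunctor A n).map ε) := by
  choose M φ hφ using exists_epi_homologyMap_single X
  let d : ℕ ≃ ℤ := Equiv.intEquivNat.symm
  refine ⟨M, d, Sigma.desc fun k ↦ φ (d k), fun n ↦ ?_⟩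
  obtain ⟨k, rfl⟩ := d.surjective n
  have fac : (homologyFunctor A (d k)).map (Sigma.ι _ k) ≫
      (homologyFunctor A (d k)).map (Sigma.desc fun k ↦ φ (d k)) =
        (homologyFunctor A (d k)).map (φ (d k)) := by
    rw [← Functor.map_comp, Sigma.ι_desc]
  exact epi_of_epi_fac fac

variable (P : ObjectProperty (DerivedCategory A)) [P.IsTriangulated] [P.IsClosedUnderIsomorphisms]
  [P.IsClosedUnderColimitsOfShape (Discrete ℕ)]

theorem prop_single_of_exists_shortExact (C : ObjectProperty A)
    (hC : ∀ M, C M → ∃ S : ShortComplex A, S.ShortExact ∧ S.X₃ = M ∧ C S.X₁ ∧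
      P ((singleFunctor A 0).obj S.X₂)) :
    C ≤ P.inverseImage (singleFunctor A 0) := by
  let C' : ObjectProperty (DerivedCategory A) :=
    fun X ↦ ∃ (M : A) (n : ℤ), C M ∧ X = ((singleFunctor A 0).obj M)⟦n⟧
  suffices C' ≤ P from fun M hM ↦
    P.prop_of_iso ((shiftFunctorZero _ ℤ).app _) (this _ ⟨M, 0, hM, rfl⟩)
  refine prop_of_exists_isGhost_trW P C' ?_
  rintro _ ⟨_, n, hM, rfl⟩
  obtain ⟨S, hS, rfl, h₁, h₂⟩ := hC _ hM
  have hδ : P.trW hS.singleδ := (P.trW_iff' _).2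
    ⟨_, _, _, rot_of_distTriang _ hS.singleTriangle_distinguished, h₂⟩
  let f : ((singleFunctor A 0).obj S.X₃)⟦n⟧ ⟶ ((singleFunctor A 0).obj S.X₁)⟦1 + n⟧ :=
    hS.singleδ⟦n⟧' ≫ (shiftFunctorAdd _ 1 n).inv.app _
  exact ⟨_, f, ⟨_, _, h₁, rfl⟩, isGhost_shift_single (by lia) f,
    P.trW.comp_mem _ _ (hδ.shift n) (P.trW_of_isIso _)⟩

theorem prop_of_prop_single (h : ∀ M : A, P ((singleFunctor A 0).obj M)) : P = ⊤ := by
  refine top_le_iff.1 (prop_of_exists_isGhost_trW P ⊤ fun X _ ↦ ?_)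
  obtain ⟨M, d, ε, hε⟩ := exists_epi_homologyMap_coproduct_single X
  obtain ⟨Y, f, _, hT⟩ := distinguished_cocone_triangle ε
  exact ⟨Y, f, trivial, (isGhost_mor₂_iff_epi hT).2 hε,
    (P.trW_iff' _).2 ⟨_, _, _, hT, P.prop_colimit _ fun k ↦ P.prop_of_iso
      (((singleFunctors A).shiftIso _ _ 0 (neg_add_cancel _)).app _) (P.le_shift _ _ (h _))⟩⟩

end SingleFunctor

section Colimits

open DerivedCategory

lemma costructuredArrow_functor_id_isDiscrete {J : Type*} [Category* J] (a : J) :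
    IsDiscrete (CostructuredArrow (Discrete.functor (id : J → J)) a) where
  subsingleton _ _ := ⟨fun _ _ ↦ CostructuredArrow.ext _ _ (Subsingleton.elim _ _)⟩
  eq_of_hom {X Y} f := by
    obtain ⟨⟨i⟩, ⟨⟨⟩⟩, g⟩ := X
    obtain ⟨⟨j⟩, ⟨⟨⟩⟩, h⟩ := Y
    obtain rfl : i = j := Discrete.eq_of_hom f.left
    obtain rfl : g = h := by simpa using! (CostructuredArrow.w f).symm
    rfl

lemma isEquivalence_functor_id_of_isDiscrete {J : Type*} [Category* J] [IsDiscrete J] :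
    (Discrete.functor (id : J → J)).IsEquivalence where
  full := ⟨fun f ↦ ⟨Discrete.eqToHom (obj_ext_of_isDiscrete f), Subsingleton.elim _ _⟩⟩
  essSurj := ⟨fun j ↦ ⟨⟨j⟩, ⟨Iso.refl j⟩⟩⟩

variable {A : Type*} [Category* A]

lemma isClosedUnderColimitsOfShape_of_isDiscrete (Q : ObjectProperty A)
    [∀ K : Type w, Q.IsClosedUnderColimitsOfShape (Discrete K)] (J : Type w) [Category* J]
    [IsDiscrete J] : Q.IsClosedUnderColimitsOfShape J :=
  have := isEquivalence_functor_id_of_isDiscrete (J := J)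
  .of_equivalence (Discrete.functor (id : J → J)).asEquivalence

lemma hasColimitsOfShape_of_isDiscrete [HasCoproducts.{w} A] (J : Type w) [Category* J]
    [IsDiscrete J] : HasColimitsOfShape J A :=
  have := isEquivalence_functor_id_of_isDiscrete (J := J)
  hasColimitsOfShape_of_equivalence (Discrete.functor (id : J → J)).asEquivalence

variable [Abelian A]

lemma exists_shortExact_functor {J : Type w} [SmallCategory J] [HasCoproducts.{w} A]
    [HasColimitsOfShape J A] (Q : ObjectProperty A)
    [Q.IsClosedUnderIsomorphisms] [∀ K : Type w, Q.IsClosedUnderColimitsOfShape (Discrete K)]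
    (F : J ⥤ A) (hF : ∀ j, Q (F.obj j)) :
    ∃ S : ShortComplex (J ⥤ A), S.ShortExact ∧ S.X₃ = F ∧ (∀ j, Q (S.X₂.obj j)) ∧
      Q (colimit S.X₂) := by
  let L : Discrete J ⥤ J := Discrete.functor id
  have isDiscrete (a : J) : IsDiscrete (CostructuredArrow L a) :=
    costructuredArrow_functor_id_isDiscrete a
  have (a : J) : HasColimitsOfShape (CostructuredArrow L a) A := hasColimitsOfShape_of_isDiscrete _
  have (a : J) : Q.IsClosedUnderColimitsOfShape (CostructuredArrow L a) :=
    isClosedUnderColimitsOfShape_of_isDiscrete Q _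
  have : ((Functor.whiskeringLeft _ _ A).obj L).Faithful :=
    ⟨fun h ↦ NatTrans.ext (funext fun j ↦ congr_app h ⟨j⟩)⟩
  let ε := (L.lanAdjunction A).counit.app F
  refine ⟨.mk (kernel.ι ε) ε (kernel.condition ε), ?_, rfl, fun j ↦ ?_, ?_⟩
  · exact { exact := ShortComplex.exact_of_f_is_kernel _ (kernelIsKernel ε) }
  · exact Q.prop_of_iso (L.leftKanExtensionObjIsoColimit (L ⋙ F) j).symm
      (Q.prop_colimit _ fun f ↦ hF _)
  · exact Q.prop_of_iso (L.lanCompColimIso.symm.app (L ⋙ F)) (Q.prop_colimit _ fun j ↦ hF _)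

variable [HasDerivedCategory A]
  (P : ObjectProperty (DerivedCategory A)) [P.IsTriangulated] [P.IsClosedUnderIsomorphisms]

lemma prop_single_X₁ {S : ShortComplex A} (hS : S.ShortExact)
    (h₂ : P ((singleFunctor A 0).obj S.X₂)) (h₃ : P ((singleFunctor A 0).obj S.X₃)) :
    P ((singleFunctor A 0).obj S.X₁) :=
  P.ext_of_isTriangulatedClosed₁ _ hS.singleTriangle_distinguished h₂ h₃

lemma prop_single_X₂ {S : ShortComplex A} (hS : S.ShortExact)
    (h₁ : P ((singleFunctor A 0).obj S.X₁)) (h₃ : P ((singleFunctor A 0).obj S.X₃)) :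
    P ((singleFunctor A 0).obj S.X₂) :=
  P.ext_of_isTriangulatedClosed₂ _ hS.singleTriangle_distinguished h₁ h₃

variable [HasCoproducts.{w} A] [AB4OfSize.{w} A]
  [∀ K : Type w, P.IsClosedUnderColimitsOfShape (Discrete K)]

theorem isClosedUnderColimitsOfShape_inverseImage_single (J : Type w) [SmallCategory J]
    [HasColimitsOfShape J A] [HasExactColimitsOfShape J A] :
    (P.inverseImage (singleFunctor A 0)).IsClosedUnderColimitsOfShape J := by
  have : P.IsClosedUnderColimitsOfShape (Discrete ℕ) :=
    .of_equivalence (Discrete.equivalence Equiv.ulift.{w})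
  have : HasCoproducts.{0} A := hasCoproducts_shrink.{0, w}
  have : AB4OfSize.{0} A := AB4OfSize_shrink A
  refine .mk' (prop_single_of_exists_shortExact P _ ?_)
  rintro _ ⟨F, hF⟩
  obtain ⟨S, hS, rfl, h₂, h⟩ := exists_shortExact_functor (P.inverseImage (singleFunctor A 0)) F hF
  refine ⟨_, hS.map_of_exact colim, rfl, ⟨S.X₁, fun j ↦ ?_⟩, h⟩
  exact prop_single_X₁ P (hS.map_of_exact ((evaluation J A).obj j)) (h₂ j) (hF j)

end Colimits

section Separator

open DerivedCategory

variable {A B : Type*} [Category* A] [Abelian A] [HasCoproducts.{w} A] [AB4OfSize.{w} A]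
  [HasDerivedCategory A] [Category.{w} B] [Abelian B] [HasCoproducts.{w} B]

theorem prop_single_obj_of_isSeparator (P : ObjectProperty (DerivedCategory A)) [P.IsTriangulated]
    [P.IsClosedUnderIsomorphisms] [∀ K : Type w, P.IsClosedUnderColimitsOfShape (Discrete K)]
    (F : B ⥤ A) [F.Additive] [PreservesFiniteLimits F] [PreservesFiniteColimits F]
    [∀ K : Type w, PreservesColimitsOfShape (Discrete K) F] {G : B} (hG : IsSeparator G)
    (h : P ((singleFunctor A 0).obj (F.obj G))) (N : B) :
    P ((singleFunctor A 0).obj (F.obj N)) := by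
  have : P.IsClosedUnderColimitsOfShape (Discrete ℕ) :=
    .of_equivalence (Discrete.equivalence Equiv.ulift.{w})
  have : HasCoproducts.{0} A := hasCoproducts_shrink.{0, w}
  have : AB4OfSize.{0} A := AB4OfSize_shrink A
  refine prop_single_of_exists_shortExact P (fun M ↦ ∃ N, F.obj N = M) ?_ _ ⟨N, rfl⟩
  rintro _ ⟨N, rfl⟩
  let ε : ∐ (fun _ : G ⟶ N ↦ G) ⟶ N := Sigma.desc id
  have : Epi ε := (isSeparator_iff_epi G).1 hG N
  let S := ShortComplex.mk (kernel.ι ε) ε (kernel.condition ε)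
  have hS : S.ShortExact := { exact := ShortComplex.exact_of_f_is_kernel _ (kernelIsKernel ε) }
  exact ⟨_, hS.map_of_exact F, rfl, ⟨_, rfl⟩,
    (P.inverseImage (singleFunctor A 0)).prop_of_isColimit
      (isColimitOfPreserves F (coproductIsCoproduct _)) fun _ ↦ h⟩

end Separator

section Submodule

variable {R : Type u} [Ring R] {M : Type u} [AddCommGroup M] [Module R M]
  (Q : ObjectProperty (ModuleCat.{u} R)) [Q.IsClosedUnderIsomorphisms]

lemma prop_sSup_of_directedOn (s : Set (Submodule R M)) (hne : s.Nonempty)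
    (hs : DirectedOn (· ≤ ·) s) [Q.IsClosedUnderColimitsOfShape s]
    (hQ : ∀ N ∈ s, Q (ModuleCat.of R N)) : Q (ModuleCat.of R (sSup s : Submodule R M)) := by
  have : Nonempty s := hne.to_subtype
  have : IsDirectedOrder s := ⟨hs.directed_val⟩
  have : IsConnected s := IsFiltered.isConnected s
  let F : s ⥤ ModuleCat.{u} R :=
    { obj N := ModuleCat.of R N
      map f := ModuleCat.ofHom (Submodule.inclusion f.le) }
  let c : Cocone F :=
    { pt := ModuleCat.of R (sSup s : Submodule R M)
      ι := { app N := ModuleCat.ofHom (Submodule.inclusion (le_sSup N.2)) } }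
  have (N : s) : Mono (c.ι.app N) :=
    (ModuleCat.mono_iff_injective _).2 (Submodule.inclusion_injective (le_sSup N.2))
  have : Mono c.ι := NatTrans.mono_of_mono_app _
  have : Mono (colimit.desc F c) :=
    colim.map_mono' c.ι (colimit.isColimit F) (isColimitConstCocone _ _) _
      fun N ↦ (colimit.ι_desc c N).trans (Category.comp_id _).symm
  have : Epi (colimit.desc F c) := by
    refine (ModuleCat.epi_iff_surjective _).2 ?_
    rintro ⟨x, hx⟩
    obtain ⟨N, hN, hxN⟩ := (Submodule.mem_sSup_of_directed hne hs).1 hx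
    exact ⟨colimit.ι F ⟨N, hN⟩ ⟨x, hxN⟩, ConcreteCategory.congr_hom (colimit.ι_desc c _) _⟩
  have : IsIso (colimit.desc F c) := isIso_of_mono_of_epi _
  exact Q.prop_of_iso (asIso (colimit.desc F c)) (Q.prop_colimit F fun N ↦ hQ N N.2)

variable [Q.IsClosedUnderExtensions]

lemma prop_comap_of_surjective {M' : Type u} [AddCommGroup M'] [Module R M'] {f : M →ₗ[R] M'}
    (hf : Function.Surjective f) (hQ : Q (ModuleCat.of R (LinearMap.ker f)))
    {S : Submodule R M'} (hS : Q (ModuleCat.of R S)) : Q (ModuleCat.of R (S.comap f)) := by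
  let g : S.comap f →ₗ[R] S := f.submoduleComap S
  have hg : Function.Surjective g := LinearMap.submoduleComap_surjective_of_surjective f S hf
  have : LinearMap.ker g = (LinearMap.ker f).comap (S.comap f).subtype := by
    ext x
    simp [g, Subtype.ext_iff]
  have e : LinearMap.ker g ≃ₗ[R] LinearMap.ker f :=
    LinearEquiv.ofEq _ _ this ≪≫ₗ Submodule.comapSubtypeEquivOfLe (f.ker_le_comap)
  exact Q.prop_X₂_of_shortExact (LinearMap.shortExact_shortComplexKer hg)
    (Q.prop_of_iso e.symm.toModuleIso hQ) hS

theorem prop_of_forall_exists_submodule_quotient [Q.ContainsZero]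
    (hQ : ∀ (J : Type u) [SmallCategory J] [IsFiltered J], Q.IsClosedUnderColimitsOfShape J)
    (hM : ∀ N : Submodule R M, N ≠ ⊤ → ∃ S : Submodule R (M ⧸ N), S ≠ ⊥ ∧ Q (ModuleCat.of R S)) :
    Q (ModuleCat.of R M) := by
  obtain ⟨N, hN⟩ : ∃ N, Maximal {N : Submodule R M | Q (ModuleCat.of R N)} N := by
    refine zorn_le₀ _ fun c hc hchain ↦ ?_
    obtain rfl | hne := c.eq_empty_or_nonempty
    · exact ⟨⊥, Q.prop_of_isZero (ModuleCat.isZero_of_subsingleton _), by simp⟩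
    have : Nonempty c := hne.to_subtype
    have : IsDirectedOrder c := ⟨hchain.directedOn.directed_val⟩
    have := hQ c
    exact ⟨sSup c, prop_sSup_of_directedOn Q c hne hchain.directedOn hc, fun _ ↦ le_sSup⟩
  suffices N = ⊤ by
    subst this
    exact Q.prop_of_iso Submodule.topEquiv.toModuleIso hN.prop
  by_contra hne
  obtain ⟨S, hS, hQS⟩ := hM N hne
  have hker : Q (ModuleCat.of R (LinearMap.ker N.mkQ)) :=
    Q.prop_of_iso (LinearEquiv.ofEq _ _ N.ker_mkQ.symm).toModuleIso hN.prop
  have hle : S.comap N.mkQ ≤ N :=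
    hN.le_of_ge (prop_comap_of_surjective Q N.mkQ_surjective hker hQS) (Submodule.le_comap_mkQ N S)
  have hcomap : S.comap N.mkQ = (⊥ : Submodule R (M ⧸ N)).comap N.mkQ := by
    simpa using hle.antisymm (Submodule.le_comap_mkQ N S)
  exact hS (Submodule.comap_injective_of_surjective N.mkQ_surjective hcomap)

end Submodule

namespace IsLocalizingSubcategory

variable {T : Type u} [Category.{v} T] [HasZeroObject T] [Preadditive T] [HasShift T ℤ]
  [∀ n : ℤ, (shiftFunctor T n).Additive] [Pretriangulated T] {L : Set T}
  (hL : IsLocalizingSubcategory.{w} L)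

include hL

lemma isClosedUnderIsomorphisms : ObjectProperty.IsClosedUnderIsomorphisms (C := T) (· ∈ L) :=
  ⟨hL.mem_of_iso⟩

lemma isClosedUnderColimitsOfShape (K : Type w) :
    ObjectProperty.IsClosedUnderColimitsOfShape (C := T) (· ∈ L) (Discrete K) where
  colimitsOfShape_le := by
    rintro X ⟨p⟩
    exact hL.coproduct_mem (fun k ↦ p.diag.obj ⟨k⟩) (fun k ↦ p.prop_diag_obj ⟨k⟩) _
      ((IsColimit.precomposeHomEquiv Discrete.natIsoFunctor.symm _).symm p.isColimit)

lemma isTriangulated : ObjectProperty.IsTriangulated (C := T) (· ∈ L) :=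
  have := hL.isClosedUnderIsomorphisms
  have := hL.isClosedUnderColimitsOfShape PEmpty
  have : ObjectProperty.IsClosedUnderColimitsOfShape (C := T) (· ∈ L) (Discrete PEmpty.{1}) :=
    .of_equivalence (Discrete.equivalence (Equiv.equivPEmpty PEmpty.{w + 1}))
  have : ObjectProperty.IsStableUnderShift (C := T) (· ∈ L) ℤ :=
    ⟨fun n ↦ ⟨fun X hX ↦ hL.shift_mem X n hX⟩⟩
  have : ObjectProperty.IsTriangulatedClosed₃ (C := T) (· ∈ L) :=
    .mk' hL.cone_mem
  have : ObjectProperty.IsTriangulatedClosed₂ (C := T) (· ∈ L) :=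
    .of_isTriangulatedClosed₃
  have : ObjectProperty.ContainsZero (C := T) (· ∈ L) :=
    ⟨⊥_ T, initialIsInitial.isZero, ObjectProperty.prop_colimit _ _ fun j ↦ j.as.elim⟩
  {}

end IsLocalizingSubcategory

section ModuleCat

open DerivedCategory

variable {R : Type u} [CommRing R] [HasDerivedCategory.{w} (ModuleCat.{u} R)]
  (P : ObjectProperty (DerivedCategory (ModuleCat.{u} R))) [P.IsTriangulated]
  [P.IsClosedUnderIsomorphisms] [∀ K : Type u, P.IsClosedUnderColimitsOfShape (Discrete K)]

lemma prop_single_of_isScalarTower {S : Type u} [Ring S] [Algebra R S]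
    (h : P ((singleFunctor (ModuleCat.{u} R) 0).obj (ModuleCat.of R S)))
    (M : Type u) [AddCommGroup M] [Module R M] [Module S M] [IsScalarTower R S M] :
    P ((singleFunctor (ModuleCat.{u} R) 0).obj (ModuleCat.of R M)) := by
  let e (N : Type u) [AddCommGroup N] [Module R N] [Module S N] [IsScalarTower R S N] :
      ModuleCat.of R N ≅ (ModuleCat.restrictScalars (algebraMap R S)).obj (ModuleCat.of S N) :=
    let X := (ModuleCat.restrictScalars (algebraMap R S)).obj (ModuleCat.of S N)
    let f : N ≃+ X := AddEquiv.refl N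
    let f' : ModuleCat.of R N ≃ₗ[R] X :=
      f.toLinearEquiv fun r x ↦ (algebraMap_smul S r (x : N)).symm
    f'.toModuleIso
  let F := ModuleCat.restrictScalars.{u} (algebraMap R S)
  have : PreservesFiniteLimits F := ⟨fun _ _ _ ↦ ⟨inferInstance⟩⟩
  let eG : ModuleCat.of R S ≅ F.obj (ModuleCat.of S (Shrink.{u} S)) :=
    e S ≪≫ F.mapIso (Shrink.linearEquiv S S).symm.toModuleIso
  exact P.prop_of_iso ((singleFunctor _ 0).mapIso (e M).symm) <|
    prop_single_obj_of_isSeparator P F (ModuleCat.isSeparator S)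
      (P.prop_of_iso ((singleFunctor _ 0).mapIso eG) h) _

lemma prop_single_quotient (m : Ideal R) [m.IsMaximal]
    (h : P ((singleFunctor (ModuleCat.{u} R) 0).obj (ModuleCat.of R (Localization.AtPrime m)))) :
    P ((singleFunctor (ModuleCat.{u} R) 0).obj (ModuleCat.of R (R ⧸ m))) := by
  have hκ := prop_single_of_isScalarTower P h m.ResidueField
  let e : (R ⧸ m) ≃ₗ[R] m.ResidueField :=
    .ofBijective ((Algebra.linearMap (R ⧸ m) m.ResidueField).restrictScalars R)
      m.bijective_algebraMap_quotient_residueField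
  exact P.prop_of_iso ((singleFunctor _ 0).mapIso e.symm.toModuleIso) hκ

theorem eq_top_of_prop_single_quotient (hR : IsSemiArtinianRing R)
    (h : ∀ m : Ideal R, m.IsMaximal →
      P ((singleFunctor (ModuleCat.{u} R) 0).obj (ModuleCat.of R (R ⧸ m)))) : P = ⊤ := by
  let Q : ObjectProperty (ModuleCat.{u} R) := P.inverseImage (singleFunctor (ModuleCat.{u} R) 0)
  have : Q.IsClosedUnderExtensions := ⟨prop_single_X₂ P⟩
  have hQR : Q (ModuleCat.of R R) := by
    refine prop_of_forall_exists_submodule_quotient Q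
      (fun J _ _ ↦ isClosedUnderColimitsOfShape_inverseImage_single P J) fun I hI ↦ ?_
    obtain ⟨S, hS⟩ := hR I hI
    obtain ⟨m, hm, ⟨e⟩⟩ := isSimpleModule_iff_quot_maximal.1 hS
    exact ⟨S, Submodule.nontrivial_iff_ne_bot.1 hS.nontrivial,
      Q.prop_of_iso e.symm.toModuleIso (h m hm)⟩
  have : P.IsClosedUnderColimitsOfShape (Discrete ℕ) :=
    .of_equivalence (Discrete.equivalence Equiv.ulift.{u})
  exact prop_of_prop_single P fun M ↦ prop_single_of_isScalarTower P hQR M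

end ModuleCat

/- For a ring that is not absolutely flat, `residueFieldObj R P` is the local ring `R_P`, not its
residue field. -/
theorem statement16_general (R : Type u) [CommRing R] [HasDerivedCategory.{w} (ModuleCat.{u} R)]
    (hsa : IsSemiArtinianRing R) :
    localizingClosure.{u} {A : DerivedCategory (ModuleCat.{u} R) |
      ∃ P : PrimeSpectrum R, A = residueFieldObj R P} = Set.univ := by
  refine Set.eq_univ_of_forall ?_
  rintro X L ⟨hL, hS⟩
  have := hL.isTriangulated
  have := hL.isClosedUnderIsomorphisms
  have := hL.isClosedUnderColimitsOfShape
  have h : (· ∈ L : ObjectProperty _) = ⊤ :=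
    eq_top_of_prop_single_quotient _ hsa fun m hm ↦
      prop_single_quotient _ m (hS ⟨⟨m, hm.isPrime⟩, rfl⟩)
  exact (congr_fun h X).mpr trivial

theorem statement16 (R : Type u) [CommRing R] [HasDerivedCategory.{w} (ModuleCat.{u} R)]
    (hreg : IsAbsolutelyFlat R) (hsa : IsSemiArtinianRing R) :
    localizingClosure.{u} {A : DerivedCategory (ModuleCat.{u} R) |
      ∃ P : PrimeSpectrum R, A = residueFieldObj R P} = Set.univ :=
  statement16_general R hsa
end
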